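/- arXiv:2103.12042 — 6 statements merged into one kernel-verified Lean document; each statement's English description precedes it below -/
import Mathlib

section
/- Non-negativity of the entropy production (Spohn's inequality) for a GKLS generator: if σ is a positive-definite Hermitian n×n matrix with L(σ) = 0, then for every positive-definite Hermitian n×n matrix ρ with Tr ρ = 1, the entropy production −Re Tr( L(ρ) · ( log ρ − log σ ) ) is nonnegative, where log denotes the matrix logarithm of a positive-definite Hermitian matrix obtained by applying the real logarithm through the continuous functional calculus. -/
open scoped Matrix ComplexOrder

/-!
For `t ∈ (0, 1)` let `X` solve the Sylvester equation `(1 - t) σ X + t X ρ = σ`. Leibniz's rule for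
the Heisenberg dual of `L` has the carré du champ `Γ` as its defect, and together with `L σ = 0` it
gives
`t Tr (L ρ Xᴴ X) = t Tr (ρ Γ(X)) + (1 - t) Tr (σ Γ(Xᴴ)) ≥ 0`.
In eigenprojections `E i` of `σ` and `F j` of `ρ` the left-hand side is a combination of the
numbers `Re Tr (L ρ F k E i F j)`, and, up to a negative factor and a multiple of `Tr (L ρ) = 0`,
its coefficients are the `t`-derivatives of the divided differences of
`x ↦ x log ((1 - t) q + t x)`. Hence the combination of these divided differences decreases from
`Re Tr (L ρ log σ)` at `t = 0` to `Re Tr (L ρ (log ρ + 1))` at `t = 1`.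
-/

section SpectralSum

variable {R A ι κ : Type*} [CommSemiring R] [Semiring A] [Algebra R A] [Fintype ι] [Fintype κ]

/-- The sum `∑ x i j E i F j`: if `E` and `F` are the spectral resolutions of `σ` and `ρ`, this is
the function `x` of left multiplication by `σ` and right multiplication by `ρ`, applied to `1`. -/
def pairSpectralSum (E : ι → A) (F : κ → A) (x : ι → κ → R) : A :=
  ∑ i, ∑ j, x i j • (E i * F j)

/-- The sum `∑ c i j k F k E i F j`, linear in the coefficients `c`: the form taken by quadratic
expressions `star X * X` in pair spectral sums `X`. -/
def tripleSpectralSum (E : ι → A) (F : κ → A) : (ι → κ → κ → R) →ₗ[R] A where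
  toFun c := ∑ i, ∑ j, ∑ k, c i j k • (F k * E i * F j)
  map_add' c d := by simp only [Pi.add_apply, add_smul, Finset.sum_add_distrib]
  map_smul' r c := by
    simp only [Pi.smul_apply, smul_eq_mul, mul_smul, Finset.smul_sum, RingHom.id_apply]

theorem tripleSpectralSum_apply (E : ι → A) (F : κ → A) (c : ι → κ → κ → R) :
    tripleSpectralSum E F c = ∑ i, ∑ j, ∑ k, c i j k • (F k * E i * F j) := rfl

theorem tripleSpectralSum_left (E : ι → A) {F : κ → A} (hF : ∑ j, F j = 1) (g : ι → R) :
    tripleSpectralSum E F (fun i _ _ ↦ g i) = ∑ i, g i • E i := by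
  simp only [tripleSpectralSum_apply, ← Finset.smul_sum, ← Finset.sum_mul, ← Finset.mul_sum, hF,
    one_mul, mul_one]

theorem tripleSpectralSum_right {E : ι → A} {F : κ → A} (hE : ∑ i, E i = 1)
    (hF : OrthogonalIdempotents F) (g : κ → κ → R) :
    tripleSpectralSum E F (fun _ j k ↦ g j k) = ∑ j, g j j • F j := by
  classical
  rw [tripleSpectralSum_apply, Finset.sum_comm]
  refine Finset.sum_congr rfl fun j _ ↦ ?_
  rw [Finset.sum_comm]
  simp only [← Finset.smul_sum, ← Finset.sum_mul, ← Finset.mul_sum, hE, mul_one, hF.mul_eq,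
    smul_ite, smul_zero, Finset.sum_ite_eq', Finset.mem_univ, if_true]

theorem star_pairSpectralSum_mul_self [StarRing R] [TrivialStar R] [StarRing A] [StarModule R A]
    {E : ι → A} {F : κ → A} (hE : OrthogonalIdempotents E) (hEsa : ∀ i, IsSelfAdjoint (E i))
    (hFsa : ∀ j, IsSelfAdjoint (F j)) (x : ι → κ → R) :
    star (pairSpectralSum E F x) * pairSpectralSum E F x =
      tripleSpectralSum E F (fun i j k ↦ x i j * x i k) := by
  classical
  have block (i i' : ι) (j k : κ) :
      F k * E i' * (E i * F j) = if i' = i then F k * E i * F j else 0 := by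
    rw [mul_assoc, ← mul_assoc (E i'), hE.mul_eq]
    split_ifs with h <;> simp [h, mul_assoc]
  simp only [pairSpectralSum, tripleSpectralSum_apply, star_sum, star_smul, star_mul, star_trivial,
    (hEsa _).star_eq, (hFsa _).star_eq, Finset.mul_sum, Finset.sum_mul, smul_mul_smul_comm, block,
    smul_ite, smul_zero]
  refine Finset.sum_congr rfl fun i _ ↦ Finset.sum_congr rfl fun j _ ↦ ?_
  rw [Finset.sum_comm]
  simp only [Finset.sum_ite_eq', Finset.mem_univ, if_true, mul_comm]

theorem pairSpectralSum_left (E : ι → A) {F : κ → A} (hF : ∑ j, F j = 1) (g : ι → R) :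
    pairSpectralSum E F (fun i _ ↦ g i) = ∑ i, g i • E i := by
  simp only [pairSpectralSum, ← Finset.smul_sum, ← Finset.mul_sum, hF, mul_one]

theorem sum_smul_mul_pairSpectralSum {E : ι → A} (hE : OrthogonalIdempotents E) (F : κ → A)
    (q : ι → R) (x : ι → κ → R) :
    (∑ i, q i • E i) * pairSpectralSum E F x = pairSpectralSum E F fun i j ↦ q i * x i j := by
  classical
  have block (i i' : ι) (j : κ) : E i' * (E i * F j) = if i' = i then E i * F j else 0 := by
    rw [← mul_assoc, hE.mul_eq, ite_mul, zero_mul]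
    split_ifs with h <;> simp only [h]
  simp only [pairSpectralSum, Finset.mul_sum, Finset.sum_mul, smul_mul_smul_comm, block, smul_ite,
    smul_zero, Finset.sum_ite_eq', Finset.mem_univ, if_true]

theorem pairSpectralSum_mul_sum_smul (E : ι → A) {F : κ → A} (hF : OrthogonalIdempotents F)
    (x : ι → κ → R) (p : κ → R) :
    pairSpectralSum E F x * ∑ j, p j • F j = pairSpectralSum E F fun i j ↦ x i j * p j := by
  classical
  simp only [pairSpectralSum, Finset.mul_sum, Finset.sum_mul, smul_mul_smul_comm, mul_assoc,
    hF.mul_eq, mul_ite, mul_zero, smul_ite, smul_zero]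
  rw [Finset.sum_comm]
  simp only [Finset.sum_ite_eq', Finset.mem_univ, if_true]

theorem pairSpectralSum_sylvester {K : Type*} [Field K] [Algebra K A] {E : ι → A} {F : κ → A}
    (hE : OrthogonalIdempotents E) (hF : CompleteOrthogonalIdempotents F) (q : ι → K) (p : κ → K)
    (a b : K) (h : ∀ i j, a * q i + b * p j ≠ 0) :
    let X := pairSpectralSum E F fun i j ↦ q i / (a * q i + b * p j)
    a • ((∑ i, q i • E i) * X) + b • (X * ∑ j, p j • F j) = ∑ i, q i • E i := by
  intro X
  rw [sum_smul_mul_pairSpectralSum hE, pairSpectralSum_mul_sum_smul _ hF.toOrthogonalIdempotents,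
    ← pairSpectralSum_left E hF.complete]
  simp only [pairSpectralSum, Finset.smul_sum, ← Finset.sum_add_distrib, smul_smul, ← add_smul]
  refine Finset.sum_congr rfl fun i _ ↦ Finset.sum_congr rfl fun j _ ↦ ?_
  congr 1
  have := h i j
  field_simp

end SpectralSum

section LogInterpolation

/-- The function `x ↦ x log ((1 - t) q + t x)`, interpolating between `x log q` and `x log x`. Its
divided differences pass from the constant `log q` at `t = 0` to those of `x log x`, with diagonal
values `log x + 1`, at `t = 1`. -/
noncomputable def interpolatedMulLog (q t x : ℝ) : ℝ :=
  x * Real.log ((1 - t) * q + t * x)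

theorem dslope_interpolatedMulLog_zero (q p r : ℝ) :
    dslope (interpolatedMulLog q 0) p r = Real.log q := by
  have hlin : interpolatedMulLog q 0 = fun x ↦ x * Real.log q := by
    funext x
    simp [interpolatedMulLog]
  rw [hlin]
  rcases eq_or_ne r p with rfl | h
  · simp [dslope_same]
  · rw [dslope_of_ne _ h, slope_def_field, ← sub_mul, mul_div_cancel_left₀ _ (sub_ne_zero.2 h)]

theorem interpolatedMulLog_one (q : ℝ) :
    interpolatedMulLog q 1 = fun x ↦ x * Real.log x := by
  funext x
  simp [interpolatedMulLog]

theorem interpolation_pos {q x t : ℝ} (hq : 0 < q) (hx : 0 < x) (ht : t ∈ Set.Icc 0 1) :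
    0 < (1 - t) * q + t * x :=
  convex_Ioi (0 : ℝ) hq hx (sub_nonneg.2 ht.2) ht.1 (sub_add_cancel 1 t)

theorem hasDerivAt_interpolatedMulLog {q t x : ℝ} (h : (1 - t) * q + t * x ≠ 0) :
    HasDerivAt (interpolatedMulLog q t)
      (Real.log ((1 - t) * q + t * x) + t * x / ((1 - t) * q + t * x)) x := by
  have hlin : HasDerivAt (fun x ↦ (1 - t) * q + t * x) t x := by
    simpa using ((hasDerivAt_id x).const_mul t).const_add ((1 - t) * q)
  refine ((hasDerivAt_id' x).mul (hlin.log h)).congr_deriv ?_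
  ring

theorem hasDerivAt_dslope_interpolatedMulLog {q p r t : ℝ} (hp : (1 - t) * q + t * p ≠ 0)
    (hr : (1 - t) * q + t * r ≠ 0) :
    HasDerivAt (fun t ↦ dslope (interpolatedMulLog q t) p r)
      (((1 - t) * q * (p + r - q) + t * p * r) /
        (((1 - t) * q + t * p) * ((1 - t) * q + t * r))) t := by
  have hlin (x : ℝ) : HasDerivAt (fun t ↦ (1 - t) * q + t * x) (x - q) t := by
    refine ((((hasDerivAt_id' t).const_sub 1).mul_const q).add
      ((hasDerivAt_id' t).mul_const x)).congr_deriv ?_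
    ring
  rcases eq_or_ne r p with rfl | hne
  · have hdiag : (fun t ↦ dslope (interpolatedMulLog q t) r r) =ᶠ[nhds t]
        fun t ↦ Real.log ((1 - t) * q + t * r) + t * r / ((1 - t) * q + t * r) := by
      filter_upwards [(hlin r).continuousAt.eventually_ne hr] with u hu
      rw [dslope_same, (hasDerivAt_interpolatedMulLog hu).deriv]
    refine (((hlin r).log hr).add (((hasDerivAt_id' t).mul_const r).div (hlin r) hr)
      |>.congr_of_eventuallyEq hdiag).congr_deriv ?_
    field_simp
    ring
  · simp only [dslope_of_ne _ hne, slope_def_field, interpolatedMulLog]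
    refine ((((hlin r).log hr).const_mul r).sub
      (((hlin p).log hp).const_mul p) |>.div_const (r - p)).congr_deriv ?_
    have hsub : r - p ≠ 0 := sub_ne_zero.2 hne
    generalize hmp : (1 - t) * q + t * p = m at *
    generalize hmr : (1 - t) * q + t * r = m' at *
    field_simp
    rw [← hmp, ← hmr]
    ring

end LogInterpolation

section LogComparison

variable {A ι κ : Type*} [Ring A] [Algebra ℝ A] [Fintype ι] [Fintype κ] {E : ι → A} {F : κ → A}

theorem hasDerivAt_map_tripleSpectralSum (φ : A →ₗ[ℝ] ℝ) {c : ℝ → ι → κ → κ → ℝ}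
    {c' : ι → κ → κ → ℝ} {t : ℝ} (hc : ∀ i j k, HasDerivAt (fun t ↦ c t i j k) (c' i j k) t) :
    HasDerivAt (fun t ↦ φ (tripleSpectralSum E F (c t))) (φ (tripleSpectralSum E F c')) t := by
  have hc' : HasDerivAt c c' t := by simpa only [hasDerivAt_pi] using hc
  exact (φ ∘ₗ tripleSpectralSum E F).toContinuousLinearMap.hasFDerivAt.comp_hasDerivAt t hc'

variable [StarRing A] [StarModule ℝ A] {q : ι → ℝ} {p : κ → ℝ}

theorem antitoneOn_map_tripleSpectralSum_dslope
    (hE : CompleteOrthogonalIdempotents E) (hEsa : ∀ i, IsSelfAdjoint (E i))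
    (hF : CompleteOrthogonalIdempotents F) (hFsa : ∀ j, IsSelfAdjoint (F j))
    (hq : ∀ i, 0 < q i) (hp : ∀ j, 0 < p j) (φ : A →ₗ[ℝ] ℝ) (hφ : φ 1 = 0)
    (hpos : ∀ a b : ℝ, 0 < a → 0 < b → ∀ X : A,
      a • ((∑ i, q i • E i) * X) + b • (X * ∑ j, p j • F j) = ∑ i, q i • E i →
        0 ≤ φ (star X * X)) :
    AntitoneOn (fun t ↦ φ (tripleSpectralSum E F fun i j k ↦
      dslope (interpolatedMulLog (q i) t) (p j) (p k))) (Set.Icc 0 1) := by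
  have hm {t : ℝ} (ht : t ∈ Set.Icc 0 1) (i : ι) (j : κ) : (1 - t) * q i + t * p j ≠ 0 :=
    (interpolation_pos (hq i) (hp j) ht).ne'
  have hderiv (t : ℝ) (ht : t ∈ Set.Icc 0 1) :=
    hasDerivAt_map_tripleSpectralSum (E := E) (F := F) φ fun i j k ↦
      hasDerivAt_dslope_interpolatedMulLog (hm ht i j) (hm ht i k)
  refine antitoneOn_of_hasDerivWithinAt_nonpos (convex_Icc 0 1)
    (fun t ht ↦ (hderiv t ht).continuousAt.continuousWithinAt)
    (fun t ht ↦ (hderiv t (interior_subset ht)).hasDerivWithinAt) fun t ht ↦ ?_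
  have htIcc : t ∈ Set.Icc 0 1 := interior_subset ht
  rw [interior_Icc] at ht
  have ht0 : t ≠ 0 := ht.1.ne'
  let x (i : ι) (j : κ) : ℝ := q i / ((1 - t) * q i + t * p j)
  have hcoeff : (fun i j k ↦ ((1 - t) * q i * (p j + p k - q i) + t * p j * p k) /
      (((1 - t) * q i + t * p j) * ((1 - t) * q i + t * p k))) =
        t⁻¹ • (fun _ _ _ ↦ 1) - ((1 - t) / t) • fun i j k ↦ x i j * x i k := by
    funext i j k
    have hj := hm htIcc i j
    have hk := hm htIcc i k
    simp only [Pi.sub_apply, Pi.smul_apply, smul_eq_mul, x]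
    field_simp
    ring
  have hone : tripleSpectralSum E F (fun _ _ _ ↦ (1 : ℝ)) = 1 := by
    simp only [tripleSpectralSum_left E hF.complete fun _ ↦ (1 : ℝ), one_smul, hE.complete]
  have hX := hpos (1 - t) t (sub_pos.2 ht.2) ht.1 _
    (pairSpectralSum_sylvester hE.toOrthogonalIdempotents hF q p _ _ (hm htIcc))
  rw [star_pairSpectralSum_mul_self hE.toOrthogonalIdempotents hEsa hFsa] at hX
  rw [hcoeff, map_sub, map_smul, map_smul, map_sub, map_smul, map_smul, hone, hφ, smul_zero,
    zero_sub, neg_nonpos]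
  exact smul_nonneg (div_nonneg (sub_nonneg.2 htIcc.2) htIcc.1) hX

theorem map_sum_log_le_map_sum_log
    (hE : CompleteOrthogonalIdempotents E) (hEsa : ∀ i, IsSelfAdjoint (E i))
    (hF : CompleteOrthogonalIdempotents F) (hFsa : ∀ j, IsSelfAdjoint (F j))
    (hq : ∀ i, 0 < q i) (hp : ∀ j, 0 < p j) (φ : A →ₗ[ℝ] ℝ) (hφ : φ 1 = 0)
    (hpos : ∀ a b : ℝ, 0 < a → 0 < b → ∀ X : A,
      a • ((∑ i, q i • E i) * X) + b • (X * ∑ j, p j • F j) = ∑ i, q i • E i →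
        0 ≤ φ (star X * X)) :
    φ (∑ j, Real.log (p j) • F j) ≤ φ (∑ i, Real.log (q i) • E i) := by
  have hzero : tripleSpectralSum E F (fun i j k ↦
      dslope (interpolatedMulLog (q i) 0) (p j) (p k)) = ∑ i, Real.log (q i) • E i := by
    simp only [dslope_interpolatedMulLog_zero]
    exact tripleSpectralSum_left E hF.complete _
  have hone : tripleSpectralSum E F (fun i j k ↦
      dslope (interpolatedMulLog (q i) 1) (p j) (p k)) = ∑ j, Real.log (p j) • F j + 1 := by
    simp only [interpolatedMulLog_one]
    rw [tripleSpectralSum_right hE.complete hF.toOrthogonalIdempotents fun j k ↦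
      dslope (fun x ↦ x * Real.log x) (p j) (p k)]
    simp only [dslope_same, Real.deriv_mul_log (hp _).ne', add_smul, one_smul,
      Finset.sum_add_distrib, hF.complete]
  have hanti := antitoneOn_map_tripleSpectralSum_dslope hE hEsa hF hFsa hq hp φ hφ hpos
    (Set.left_mem_Icc.2 zero_le_one) (Set.right_mem_Icc.2 zero_le_one) zero_le_one
  simpa only [hzero, hone, map_add, hφ, add_zero] using hanti

end LogComparison

theorem exists_spectral_resolution {𝕜 n : Type*} [RCLike 𝕜] [Fintype n] [DecidableEq n]
    {A : Matrix n n 𝕜} (hA : A.IsHermitian) :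
    ∃ E : n → Matrix n n 𝕜, CompleteOrthogonalIdempotents E ∧ (∀ i, IsSelfAdjoint (E i)) ∧
      ∀ f : ℝ → ℝ, cfc f A = ∑ i, f (hA.eigenvalues i) • E i := by
  let Φ := Unitary.conjStarAlgAut 𝕜 _ hA.eigenvectorUnitary
  refine ⟨fun i ↦ Φ (Matrix.diagonal (Pi.single i 1)), ?_, fun i ↦ ?_, fun f ↦ ?_⟩
  · exact (CompleteOrthogonalIdempotents.single fun _ ↦ 𝕜).map
      ((Φ : Matrix n n 𝕜 →+* Matrix n n 𝕜).comp (Matrix.diagonalRingHom n 𝕜))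
  · refine IsSelfAdjoint.map ?_ Φ
    rw [isSelfAdjoint_iff, Matrix.star_eq_conjTranspose, Matrix.diagonal_conjTranspose,
      Pi.star_single, star_one]
  · have hdiag : Matrix.diagonal (RCLike.ofReal ∘ f ∘ hA.eigenvalues) =
        ∑ i, (f (hA.eigenvalues i) : 𝕜) • Matrix.diagonal (Pi.single i (1 : 𝕜)) := by
      ext i j
      rcases eq_or_ne i j with rfl | h
      · simp [Matrix.sum_apply, Pi.single_apply, RCLike.real_smul_eq_coe_mul]
      · simp [Matrix.sum_apply, h]
    simp only [hA.cfc_eq, Matrix.IsHermitian.cfc, hdiag, map_sum, map_smul, Φ,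
      RCLike.real_smul_eq_coe_smul (K := 𝕜)]

section GKLS

variable {n κ : Type*} [Fintype n] [Fintype κ]

/-- The GKLS (Lindblad) generator in the Schrödinger picture, in diagonal form, with Hamiltonian
`H` and jump operators `V k`. -/
noncomputable def gklsGenerator (H : Matrix n n ℂ) (V : κ → Matrix n n ℂ) (ρ : Matrix n n ℂ) :
    Matrix n n ℂ :=
  (-Complex.I) • (H * ρ - ρ * H) +
    ∑ k, (V k * ρ * (V k)ᴴ - (1 / 2 : ℂ) • ((V k)ᴴ * V k * ρ + ρ * ((V k)ᴴ * V k)))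

/-- The GKLS generator in the Heisenberg picture: the dual of `gklsGenerator` for the bilinear
pairing `(ρ, X) ↦ Tr (ρ X)`. -/
noncomputable def gklsDual (H : Matrix n n ℂ) (V : κ → Matrix n n ℂ) (X : Matrix n n ℂ) :
    Matrix n n ℂ :=
  Complex.I • (H * X - X * H) +
    ∑ k, ((V k)ᴴ * X * V k - (1 / 2 : ℂ) • ((V k)ᴴ * V k * X + X * ((V k)ᴴ * V k)))

/-- The carré du champ (dissipation function) of a GKLS generator: the defect in Leibniz's rule
for `gklsDual` at `Xᴴ * X`. -/
def carreDuChamp (V : κ → Matrix n n ℂ) (X : Matrix n n ℂ) : Matrix n n ℂ :=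
  ∑ k, ⁅X, V k⁆ᴴ * ⁅X, V k⁆

theorem trace_gklsGenerator_mul (H : Matrix n n ℂ) (V : κ → Matrix n n ℂ) (ρ X : Matrix n n ℂ) :
    (gklsGenerator H V ρ * X).trace = (ρ * gklsDual H V X).trace := by
  have cycle (A B C : Matrix n n ℂ) : (A * (B * C)).trace = (B * (C * A)).trace := by
    rw [Matrix.trace_mul_comm, mul_assoc]
  have hcomm : ((-Complex.I) • (H * ρ - ρ * H) * X).trace =
      (ρ * (Complex.I • (H * X - X * H))).trace := by
    simp only [sub_mul, mul_sub, Matrix.smul_mul, Matrix.mul_smul, Matrix.trace_sub,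
      Matrix.trace_smul, smul_eq_mul, mul_assoc, cycle H ρ]
    ring
  have hdiss (W : Matrix n n ℂ) :
      ((W * ρ * Wᴴ - (1 / 2 : ℂ) • (Wᴴ * W * ρ + ρ * (Wᴴ * W))) * X).trace =
        (ρ * (Wᴴ * X * W - (1 / 2 : ℂ) • (Wᴴ * W * X + X * (Wᴴ * W)))).trace := by
    have hjump : (W * ρ * Wᴴ * X).trace = (ρ * (Wᴴ * X * W)).trace := by
      simpa only [mul_assoc] using cycle W ρ (Wᴴ * X)
    have hanti : (Wᴴ * W * ρ * X).trace = (ρ * (X * (Wᴴ * W))).trace := by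
      simpa only [mul_assoc] using cycle (Wᴴ * W) ρ X
    simp only [sub_mul, add_mul, mul_sub, mul_add, Matrix.smul_mul, Matrix.mul_smul,
      Matrix.trace_sub, Matrix.trace_add, Matrix.trace_smul, hjump, hanti, mul_assoc ρ]
    rw [add_comm (Matrix.trace (ρ * (X * _)))]
  simp only [gklsGenerator, gklsDual, add_mul, mul_add, Finset.sum_mul, Finset.mul_sum,
    Matrix.trace_add, Matrix.trace_sum, hcomm, hdiss]

theorem gklsDual_one [DecidableEq n] (H : Matrix n n ℂ) (V : κ → Matrix n n ℂ) :
    gklsDual H V 1 = 0 := by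
  simp only [gklsDual, mul_one, one_mul, sub_self, smul_zero, zero_add]
  exact Finset.sum_eq_zero fun k _ ↦ by module

theorem trace_gklsGenerator (H : Matrix n n ℂ) (V : κ → Matrix n n ℂ) (ρ : Matrix n n ℂ) :
    (gklsGenerator H V ρ).trace = 0 := by
  classical
  rw [← mul_one (gklsGenerator H V ρ), trace_gklsGenerator_mul, gklsDual_one, mul_zero,
    Matrix.trace_zero]

theorem gklsDual_conjTranspose_mul_self (H : Matrix n n ℂ) (V : κ → Matrix n n ℂ)
    (X : Matrix n n ℂ) :
    gklsDual H V (Xᴴ * X) =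
      gklsDual H V Xᴴ * X + Xᴴ * gklsDual H V X + carreDuChamp V X := by
  have hcomm (A B : Matrix n n ℂ) : Complex.I • (H * (A * B) - A * B * H) =
      (Complex.I • (H * A - A * H)) * B + A * (Complex.I • (H * B - B * H)) := by
    simp only [Matrix.smul_mul, Matrix.mul_smul]
    rw [← smul_add]
    noncomm_ring
  have hdiss (W V A B : Matrix n n ℂ) :
      W * (A * B) * V - (1 / 2 : ℂ) • (W * V * (A * B) + A * B * (W * V)) =
        (W * A * V - (1 / 2 : ℂ) • (W * V * A + A * (W * V))) * B +
        A * (W * B * V - (1 / 2 : ℂ) • (W * V * B + B * (W * V))) +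
        ⁅W, A⁆ * ⁅B, V⁆ := by
    simp only [Ring.lie_def, sub_mul, mul_sub, Matrix.smul_mul, Matrix.mul_smul, add_mul, mul_add,
      smul_add, mul_assoc]
    module
  have hbracket (W : Matrix n n ℂ) : ⁅Wᴴ, Xᴴ⁆ = ⁅X, W⁆ᴴ := by
    simp [Ring.lie_def]
  simp only [gklsDual, carreDuChamp, hcomm, hdiss, hbracket, Finset.sum_add_distrib,
    Finset.sum_mul, Finset.mul_sum, add_mul, mul_add]
  abel

theorem trace_mul_carreDuChamp_nonneg (V : κ → Matrix n n ℂ) {ρ : Matrix n n ℂ}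
    (hρ : ρ.PosSemidef) (X : Matrix n n ℂ) : 0 ≤ (ρ * carreDuChamp V X).trace := by
  rw [carreDuChamp, Finset.mul_sum, Matrix.trace_sum]
  refine Finset.sum_nonneg fun k _ ↦ ?_
  rw [← mul_assoc, Matrix.trace_mul_comm, ← mul_assoc]
  exact (hρ.mul_mul_conjTranspose_same _).trace_nonneg

variable {H : Matrix n n ℂ} {V : κ → Matrix n n ℂ} {σ ρ X : Matrix n n ℂ} {a b : ℝ}

theorem trace_gklsGenerator_mul_conjTranspose_mul_self (hσ : σ.IsHermitian) (hρ : ρ.IsHermitian)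
    (hstat : gklsGenerator H V σ = 0) (hX : a • (σ * X) + b • (X * ρ) = σ) :
    b • (gklsGenerator H V ρ * (Xᴴ * X)).trace =
      b • (ρ * carreDuChamp V X).trace + a • (σ * carreDuChamp V Xᴴ).trace := by
  have hσdual (Z : Matrix n n ℂ) : (σ * gklsDual H V Z).trace = 0 := by
    rw [← trace_gklsGenerator_mul, hstat, zero_mul, Matrix.trace_zero]
  have hXadj : a • (Xᴴ * σ) + b • (ρ * Xᴴ) = σ := by
    simpa [hσ.eq, hρ.eq] using congrArg Matrix.conjTranspose hX
  have hleft : a • (σ * (X * gklsDual H V Xᴴ)).trace +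
      b • (ρ * (gklsDual H V Xᴴ * X)).trace = 0 := by
    rw [← hσdual Xᴴ]
    nth_rw 2 [← hX]
    rw [← mul_assoc ρ, Matrix.trace_mul_comm _ X]
    simp only [add_mul, Matrix.smul_mul, Matrix.trace_add, Matrix.trace_smul, mul_assoc]
  have hright : a • (σ * (gklsDual H V X * Xᴴ)).trace +
      b • (ρ * (Xᴴ * gklsDual H V X)).trace = 0 := by
    rw [← hσdual X]
    nth_rw 2 [← hXadj]
    rw [← mul_assoc σ, Matrix.trace_mul_comm _ Xᴴ]
    simp only [add_mul, Matrix.smul_mul, Matrix.trace_add, Matrix.trace_smul, mul_assoc]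
  have hleibniz := hσdual (Xᴴᴴ * Xᴴ)
  rw [gklsDual_conjTranspose_mul_self, Matrix.conjTranspose_conjTranspose] at hleibniz
  rw [trace_gklsGenerator_mul, gklsDual_conjTranspose_mul_self]
  simp only [mul_add, Matrix.trace_add, Complex.real_smul] at hleft hright hleibniz ⊢
  linear_combination hleft + hright - a * hleibniz

theorem trace_gklsGenerator_mul_conjTranspose_mul_self_nonneg (hσ : σ.PosSemidef)
    (hρ : ρ.PosSemidef) (hstat : gklsGenerator H V σ = 0) (ha : 0 ≤ a) (hb : 0 < b)
    (hX : a • (σ * X) + b • (X * ρ) = σ) :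
    0 ≤ (gklsGenerator H V ρ * (Xᴴ * X)).trace := by
  refine nonneg_of_smul_nonneg_of_pos_left ?_ hb
  rw [trace_gklsGenerator_mul_conjTranspose_mul_self hσ.1 hρ.1 hstat hX]
  exact add_nonneg (smul_nonneg hb.le (trace_mul_carreDuChamp_nonneg V hρ X))
    (smul_nonneg ha (trace_mul_carreDuChamp_nonneg V hσ Xᴴ))

end GKLS

theorem spohn_entropy_production_nonneg_general {n κ : Type*} [Fintype n] [DecidableEq n]
    [Fintype κ] (H : Matrix n n ℂ) (V : κ → Matrix n n ℂ) {σ ρ : Matrix n n ℂ} (hσ : σ.PosDef)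
    (hσstat : gklsGenerator H V σ = 0) (hρ : ρ.PosDef) :
    0 ≤ -(Matrix.trace (gklsGenerator H V ρ * (cfc Real.log ρ - cfc Real.log σ))).re := by
  obtain ⟨E, hE, hEsa, hEcfc⟩ := exists_spectral_resolution hσ.isHermitian
  obtain ⟨F, hF, hFsa, hFcfc⟩ := exists_spectral_resolution hρ.isHermitian
  have hσE : σ = ∑ i, hσ.isHermitian.eigenvalues i • E i :=
    (cfc_id ℝ σ hσ.isHermitian.isSelfAdjoint).symm.trans (hEcfc id)
  have hρF : ρ = ∑ j, hρ.isHermitian.eigenvalues j • F j :=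
    (cfc_id ℝ ρ hρ.isHermitian.isSelfAdjoint).symm.trans (hFcfc id)
  let φ : Matrix n n ℂ →ₗ[ℝ] ℝ :=
    Complex.reLm ∘ₗ Matrix.traceLinearMap n ℝ ℂ ∘ₗ LinearMap.mulLeft ℝ (gklsGenerator H V ρ)
  have hφ (X : Matrix n n ℂ) : φ X = (gklsGenerator H V ρ * X).trace.re := rfl
  have hlog : φ (cfc Real.log ρ) ≤ φ (cfc Real.log σ) := by
    rw [hEcfc, hFcfc]
    refine map_sum_log_le_map_sum_log hE hEsa hF hFsa hσ.eigenvalues_pos hρ.eigenvalues_pos φ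
      (by rw [hφ, mul_one, trace_gklsGenerator, Complex.zero_re]) fun a b ha hb X hX ↦ ?_
    rw [← hσE, ← hρF] at hX
    exact (Complex.nonneg_iff.1 <| trace_gklsGenerator_mul_conjTranspose_mul_self_nonneg
      hσ.posSemidef hρ.posSemidef hσstat ha.le hb hX).1
  rw [← hφ, map_sub, neg_sub, sub_nonneg]
  exact hlog

/-- Spohn's inequality (non-negativity of the entropy production) for a GKLS
generator in diagonal form: if `σ` is positive definite with `L σ = 0`, then for every positive
definite `ρ` of unit trace, `−Re Tr (L ρ * (log ρ − log σ)) ≥ 0`, where `log` is given by the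
continuous functional calculus applied to the real logarithm. -/
theorem spohn_entropy_production_nonneg {n : ℕ} (hn : 0 < n)
    (H : Matrix (Fin n) (Fin n) ℂ) (hH : H.IsHermitian)
    {κ : Type*} [Fintype κ] (V : κ → Matrix (Fin n) (Fin n) ℂ)
    (L : Matrix (Fin n) (Fin n) ℂ → Matrix (Fin n) (Fin n) ℂ)
    (hL : ∀ ρ, L ρ = (-Complex.I) • (H * ρ - ρ * H) +
      ∑ k : κ, (V k * ρ * (V k)ᴴ -
        (1 / 2 : ℂ) • ((V k)ᴴ * V k * ρ + ρ * ((V k)ᴴ * V k))))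
    (σ : Matrix (Fin n) (Fin n) ℂ) (hσ : σ.PosDef) (hσstat : L σ = 0) :
    ∀ ρ : Matrix (Fin n) (Fin n) ℂ, ρ.PosDef → Matrix.trace ρ = 1 →
      0 ≤ -(Matrix.trace (L ρ * (cfc Real.log ρ - cfc Real.log σ))).re := by
  intro ρ hρ _
  obtain rfl : L = gklsGenerator H V := funext hL
  exact spohn_entropy_production_nonneg_general H V hσ hσstat hρ
end

section
/- A GKLS generator generates a positivity-preserving semigroup: for every t ≥ 0 and every positive semidefinite complex n×n matrix ρ, the matrix exp(t·L)(ρ) is positive semidefinite, where exp(t·L) is the exponential of the linear endomorphism t·L of the space of n×n complex matrices, defined by the exponential power series. -/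
open scoped Matrix ComplexOrder

/-!
A GKLS generator has the form `L ρ = G * ρ + ρ * star G + Φ ρ` with `Φ` completely positive, and

  `ρ + s • L ρ + s ^ 2 • (G * ρ * star G) = (1 + s • G) * ρ * star (1 + s • G) + s • Φ ρ`.

So for `s ≥ 0` a second-order perturbation of the Euler step `1 + s • L` preserves positivity.
Its `n`-th iterate at `s = 1 / n` tends to `exp L`, and the positive cone is closed.
-/

open Filter Topology

section Exponential

theorem norm_pow_le_norm_one_mul {𝔸 : Type*} [SeminormedRing 𝔸] (x : 𝔸) (k : ℕ) :
    ‖x ^ k‖ ≤ ‖(1 : 𝔸)‖ * ‖x‖ ^ k := by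
  induction k with
  | zero => simp
  | succ k ih =>
    calc ‖x ^ (k + 1)‖ ≤ ‖x ^ k‖ * ‖x‖ := by simpa only [pow_succ] using norm_mul_le _ _
      _ ≤ ‖(1 : 𝔸)‖ * ‖x‖ ^ k * ‖x‖ := by gcongr
      _ = ‖(1 : 𝔸)‖ * ‖x‖ ^ (k + 1) := by ring

theorem one_add_pow_eq_tsum {𝔸 : Type*} [Ring 𝔸] [TopologicalSpace 𝔸] (x : 𝔸) (n : ℕ) :
    (1 + x) ^ n = ∑' k, n.choose k • x ^ k := by
  rw [tsum_eq_sum (s := Finset.range (n + 1)), add_comm, (Commute.one_right x).add_pow]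
  · simp [nsmul_eq_mul, Nat.cast_comm]
  · intro k hk
    rw [Nat.choose_eq_zero_of_lt (by simpa using hk), zero_nsmul]

theorem norm_choose_nsmul_pow_le {𝔸 : Type*} [NormedRing 𝔸] [NormedAlgebra ℝ 𝔸] (x : 𝔸)
    (n k : ℕ) :
    ‖n.choose k • x ^ k‖ ≤ ‖(1 : 𝔸)‖ * (‖n • x‖ ^ k / k.factorial) := by
  calc ‖n.choose k • x ^ k‖
    _ = n.choose k * ‖x ^ k‖ := by rw [RCLike.norm_nsmul ℝ, nsmul_eq_mul]
    _ ≤ (n : ℝ) ^ k / k.factorial * (‖(1 : 𝔸)‖ * ‖x‖ ^ k) := by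
      gcongr
      exacts [Nat.choose_le_pow_div k n, norm_pow_le_norm_one_mul x k]
    _ = ‖(1 : 𝔸)‖ * (‖n • x‖ ^ k / k.factorial) := by
      rw [RCLike.norm_nsmul ℝ, nsmul_eq_mul, mul_pow]
      ring

theorem tendsto_choose_nsmul_pow {𝔸 : Type*} [Ring 𝔸] [TopologicalSpace 𝔸] [ContinuousMul 𝔸]
    [Algebra ℝ 𝔸] [ContinuousSMul ℝ 𝔸] {g : ℕ → 𝔸} {a : 𝔸}
    (hg : Tendsto (fun n ↦ n • g n) atTop (𝓝 a)) (k : ℕ) :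
    Tendsto (fun n ↦ n.choose k • g n ^ k) atTop (𝓝 ((k.factorial : ℝ)⁻¹ • a ^ k)) := by
  have hinv : Tendsto (fun n : ℕ ↦ (n : ℝ) * (n : ℝ)⁻¹) atTop (𝓝 1) :=
    tendsto_const_nhds.congr' <| (eventually_ne_atTop 0).mono fun n hn ↦
      (mul_inv_cancel₀ (Nat.cast_ne_zero.2 hn)).symm
  have hchoose : Tendsto (fun n : ℕ ↦ n.choose k * ((n : ℝ)⁻¹) ^ k) atTop
      (𝓝 (k.factorial : ℝ)⁻¹) := by
    simpa using ProbabilityTheory.tendsto_choose_mul_pow_atTop k hinv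
  refine (hchoose.smul (hg.pow k)).congr' <| (eventually_ne_atTop 0).mono fun n hn ↦ ?_
  have hcancel : n.choose k * ((n : ℝ)⁻¹) ^ k * (n : ℝ) ^ k = n.choose k := by
    rw [mul_assoc, ← mul_pow, inv_mul_cancel₀ (Nat.cast_ne_zero.2 hn), one_pow, mul_one]
  rw [← Nat.cast_smul_eq_nsmul ℝ n (g n), smul_pow, smul_smul, hcancel, Nat.cast_smul_eq_nsmul]

/-- The binomial series of `(1 + g n) ^ n` converges termwise to the exponential series of `a`,
and is dominated by the exponential series of `‖a‖ + 1`. -/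
theorem tendsto_one_add_pow_exp_of_tendsto_nsmul {𝔸 : Type*} [NormedRing 𝔸] [NormedAlgebra ℝ 𝔸]
    [CompleteSpace 𝔸] {g : ℕ → 𝔸} {a : 𝔸}
    (hg : Tendsto (fun n ↦ n • g n) atTop (𝓝 a)) :
    Tendsto (fun n ↦ (1 + g n) ^ n) atTop (𝓝 (NormedSpace.exp a)) := by
  simp only [one_add_pow_eq_tsum, NormedSpace.exp_eq_tsum ℝ]
  have hbound : ∀ᶠ n in atTop, ‖n • g n‖ ≤ ‖a‖ + 1 :=
    hg.norm.eventually_le_const (lt_add_one _)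
  refine tendsto_tsum_of_dominated_convergence
    ((Real.summable_pow_div_factorial (‖a‖ + 1)).mul_left ‖(1 : 𝔸)‖)
    (tendsto_choose_nsmul_pow hg) (hbound.mono fun n hn k ↦ ?_)
  exact (norm_choose_nsmul_pow_le (g n) n k).trans (by gcongr)

end Exponential

section Semigroup

theorem tendsto_nsmul_inv_smul_add_inv_sq_smul {F : Type*} [AddCommGroup F] [Module ℝ F]
    [TopologicalSpace F] [ContinuousAdd F] [ContinuousSMul ℝ F] (x y : F) :
    Tendsto (fun n : ℕ ↦ n • ((n : ℝ)⁻¹ • x + (n : ℝ)⁻¹ ^ 2 • y)) atTop (𝓝 x) := by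
  have hlim : Tendsto (fun n : ℕ ↦ x + (n : ℝ)⁻¹ • y) atTop (𝓝 x) := by
    simpa using (tendsto_inv_atTop_nhds_zero_nat (𝕜 := ℝ)).smul_const y |>.const_add x
  refine hlim.congr' <| (eventually_ne_atTop 0).mono fun n hn ↦ ?_
  simp only [← Nat.cast_smul_eq_nsmul ℝ n]
  match_scalars <;> field_simp

variable {𝕜 E : Type*} [RCLike 𝕜] [NormedAddCommGroup E] [NormedSpace 𝕜 E] [CompleteSpace E]

theorem hasSum_exp_apply (T : E →L[𝕜] E) (x : E) :
    HasSum (fun k : ℕ ↦ (k.factorial : 𝕜)⁻¹ • (T ^ k) x) (NormedSpace.exp T x) := by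
  simpa only [ContinuousLinearMap.apply_apply, smul_apply] using
    (ContinuousLinearMap.apply 𝕜 E x).hasSum (NormedSpace.exp_series_hasSum_exp' (𝕂 := 𝕜) T)

theorem mapsTo_exp_of_tendsto_nsmul {S : Set E} (hS : IsClosed S) {T : E →L[𝕜] E}
    {g : ℕ → E →L[𝕜] E} (hg : Tendsto (fun n ↦ n • g n) atTop (𝓝 T))
    (hmaps : ∀ n, Set.MapsTo ⇑(1 + g n) S S) : Set.MapsTo ⇑(NormedSpace.exp T) S S := by
  intro x hx
  let _ : NormedAlgebra ℝ (E →L[𝕜] E) := .restrictScalars ℝ 𝕜 _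
  have hlim := ((ContinuousLinearMap.apply 𝕜 E x).continuous.tendsto _).comp
    (tendsto_one_add_pow_exp_of_tendsto_nsmul hg)
  refine hS.mem_of_tendsto hlim (.of_forall fun n ↦ ?_)
  simpa using (hmaps n).iterate n hx

end Semigroup

section GKLS

variable {A : Type*} [NormedRing A] [NormedAlgebra ℂ A] [StarRing A]

/-- The Lindbladian `ρ ↦ G * ρ + ρ * star G + Φ ρ` with drift `G` and jump part `Φ`, where the
Hamiltonian and the anticommutator terms of a GKLS generator are both absorbed into `G`. Positivity
of `Φ` is not built in. -/
noncomputable def lindbladian (G : A) (Φ : A →L[ℂ] A) : A →L[ℂ] A :=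
  ContinuousLinearMap.mul ℂ A G + (ContinuousLinearMap.mul ℂ A).flip (star G) + Φ

theorem lindbladian_apply (G : A) (Φ : A →L[ℂ] A) (ρ : A) :
    lindbladian G Φ ρ = G * ρ + ρ * star G + Φ ρ := rfl

variable {κ : Type*} [Fintype κ]

/-- The completely positive map `ρ ↦ ∑ k, V k * ρ * star (V k)` with Kraus operators `V`: the jump
part of a GKLS generator. -/
noncomputable def krausMap (V : κ → A) : A →L[ℂ] A :=
  ∑ k, ContinuousLinearMap.mulLeftRight ℂ A (V k) (star (V k))

theorem krausMap_apply (V : κ → A) (ρ : A) : krausMap V ρ = ∑ k, V k * ρ * star (V k) := by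
  simp only [krausMap, sum_apply, ContinuousLinearMap.mulLeftRight_apply]

theorem krausMap_nonneg [PartialOrder A] [StarOrderedRing A] (V : κ → A) {ρ : A} (hρ : 0 ≤ ρ) :
    0 ≤ krausMap V ρ := by
  rw [krausMap_apply]
  exact Finset.sum_nonneg fun k _ ↦ star_right_conjugate_nonneg hρ (V k)

/-- The drift of the GKLS generator with Hamiltonian `H` and jump operators `V`, which is `-i` times
the non-self-adjoint effective Hamiltonian `H - (i / 2) • ∑ k, star (V k) * V k`. -/
noncomputable def gklsDrift (H : A) (V : κ → A) : A :=
  (-Complex.I) • H - (1 / 2 : ℂ) • ∑ k, star (V k) * V k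

variable [StarModule ℂ A]

theorem star_gklsDrift {H : A} (hH : IsSelfAdjoint H) (V : κ → A) :
    star (gklsDrift H V) = Complex.I • H - (1 / 2 : ℂ) • ∑ k, star (V k) * V k := by
  simp [gklsDrift, hH.star_eq]

theorem lindbladian_gklsDrift_krausMap_apply {H : A} (hH : IsSelfAdjoint H) (V : κ → A) (ρ : A) :
    lindbladian (gklsDrift H V) (krausMap V) ρ = (-Complex.I) • (H * ρ - ρ * H) +
      ∑ k, (V k * ρ * star (V k) -
        (1 / 2 : ℂ) • (star (V k) * V k * ρ + ρ * (star (V k) * V k))) := by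
  rw [lindbladian_apply, krausMap_apply, star_gklsDrift hH, gklsDrift, Finset.sum_sub_distrib,
    ← Finset.smul_sum, Finset.sum_add_distrib, ← Finset.sum_mul, ← Finset.mul_sum]
  simp only [sub_mul, mul_sub, smul_mul_assoc, mul_smul_comm]
  module

theorem smul_lindbladian (t : ℝ) (G : A) (Φ : A →L[ℂ] A) :
    t • lindbladian G Φ = lindbladian (t • G) (t • Φ) := by
  ext ρ
  simp [lindbladian_apply]

theorem one_add_smul_lindbladian_apply (s : ℝ) (G : A) (Φ : A →L[ℂ] A) (ρ : A) :
    (1 + (s • lindbladian G Φ + s ^ 2 • ContinuousLinearMap.mulLeftRight ℂ A G (star G))) ρ =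
      (1 + s • G) * ρ * star (1 + s • G) + s • Φ ρ := by
  have hstar : star (1 + s • G) = 1 + s • star G := by simp
  simp only [hstar, add_apply, one_apply_eq_self, smul_apply, lindbladian_apply,
    ContinuousLinearMap.mulLeftRight_apply, add_mul, mul_add, one_mul, mul_one, smul_mul_assoc,
    mul_smul_comm]
  module

theorem exp_lindbladian_nonneg [CompleteSpace A] [PartialOrder A] [StarOrderedRing A]
    [ClosedIciTopology A] (G : A) {Φ : A →L[ℂ] A} (hΦ : ∀ ρ, 0 ≤ ρ → 0 ≤ Φ ρ) {ρ : A}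
    (hρ : 0 ≤ ρ) : 0 ≤ NormedSpace.exp (lindbladian G Φ) ρ := by
  refine mapsTo_exp_of_tendsto_nsmul isClosed_Ici
    (tendsto_nsmul_inv_smul_add_inv_sq_smul (lindbladian G Φ)
      (ContinuousLinearMap.mulLeftRight ℂ A G (star G))) (fun n σ (hσ : 0 ≤ σ) ↦ ?_) hρ
  rw [Set.mem_Ici, one_add_smul_lindbladian_apply]
  exact add_nonneg (star_right_conjugate_nonneg hσ _) (smul_nonneg (by positivity) (hΦ σ hσ))

theorem gkls_semigroup_positivity_preserving_general [CompleteSpace A] [PartialOrder A]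
    [StarOrderedRing A] [ClosedIciTopology A] (H : A) (hH : IsSelfAdjoint H)
    (V : κ → A) (L : Module.End ℂ A)
    (hL : ∀ ρ, L ρ = (-Complex.I) • (H * ρ - ρ * H) +
      ∑ k, (V k * ρ * star (V k) -
        (1 / 2 : ℂ) • (star (V k) * V k * ρ + ρ * (star (V k) * V k)))) :
    ∀ t : ℝ, 0 ≤ t → ∀ ρ : A, 0 ≤ ρ →
      0 ≤ ∑' k : ℕ, ((k.factorial : ℂ))⁻¹ • ((t • L) ^ k) ρ := by
  intro t ht ρ hρ
  have hL_eq : L = lindbladian (gklsDrift H V) (krausMap V) :=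
    LinearMap.ext fun σ ↦ (hL σ).trans (lindbladian_gklsDrift_krausMap_apply hH V σ).symm
  have htL : t • L = lindbladian (t • gklsDrift H V) (t • krausMap V) := by
    rw [hL_eq, ← smul_lindbladian, ContinuousLinearMap.toLinearMap_smul]
  simp only [htL, ← ContinuousLinearMap.toLinearMap_pow, ContinuousLinearMap.coe_coe]
  rw [(hasSum_exp_apply _ ρ).tsum_eq]
  exact exp_lindbladian_nonneg _ (fun σ hσ ↦ smul_nonneg ht (krausMap_nonneg V hσ)) hρ

end GKLS

/-- A GKLS generator in diagonal form generates a positivity-preserving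
semigroup: for every `t ≥ 0` and positive semidefinite `ρ`, the matrix
`exp (t • L) ρ = ∑' k, (k!)⁻¹ • ((t • L) ^ k) ρ` is positive semidefinite, where the
exponential of the linear endomorphism `t • L` is given by the exponential power series. -/
theorem gkls_semigroup_positivity_preserving {n : ℕ} (hn : 0 < n)
    (H : Matrix (Fin n) (Fin n) ℂ) (hH : H.IsHermitian)
    {κ : Type*} [Fintype κ] (V : κ → Matrix (Fin n) (Fin n) ℂ)
    (L : Module.End ℂ (Matrix (Fin n) (Fin n) ℂ))
    (hL : ∀ ρ, L ρ = (-Complex.I) • (H * ρ - ρ * H) +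
      ∑ k : κ, (V k * ρ * (V k)ᴴ -
        (1 / 2 : ℂ) • ((V k)ᴴ * V k * ρ + ρ * ((V k)ᴴ * V k)))) :
    ∀ t : ℝ, 0 ≤ t → ∀ ρ : Matrix (Fin n) (Fin n) ℂ, ρ.PosSemidef →
      (∑' k : ℕ, ((k.factorial : ℂ))⁻¹ • ((t • L) ^ k) ρ).PosSemidef := by
  -- The L2 operator norm makes matrices a C⋆-algebra without changing the topology of the series.
  open scoped MatrixOrder Matrix.Norms.L2Operator in
  simpa only [Matrix.nonneg_iff_posSemidef] using
    gkls_semigroup_positivity_preserving_general H hH V L hL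
end

section
/- KMS condition for the Fourier coefficients of thermal bath correlation functions (finite-dimensional bath): define for each ω ∈ ℝ the ι×ι matrix γ(ω) with entries γ_{αβ}(ω) = ∑_{(k,l) with E_l − E_k = ω} e^{−βE_k} · Tr( Q_k · B_α · Q_l · B_β ). Then for all ω ∈ ℝ and all α, β ∈ ι one has γ_{αβ}(−ω) = e^{−βω} · γ_{βα}(ω). -/
open scoped Matrix

/-! Exchanging `k` and `l` maps the pairs of frequency `ω` onto those of frequency `-ω`. Under this
exchange the trace terms of `(α, β')` and `(β', α)` agree by cyclicity, while the Boltzmann weight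
changes from `e^{-β E k}` to `e^{-β E l} = e^{-β ω} e^{-β E k}`. -/

section Tracial

variable {R M : Type*} [Semigroup R] {τ : R → M}

theorem tracial_mul_mul_mul_comm (hτ : ∀ x y, τ (x * y) = τ (y * x)) (p a q b : R) :
    τ (p * a * q * b) = τ (q * b * p * a) := by
  simpa only [mul_assoc] using hτ (p * a) (q * b)

end Tracial

section BohrPairs

variable {K : Type*}

/-- The pairs of levels with Bohr frequency `ω`, the energy of the second level minus that of the
first. The Fourier coefficient at `ω` collects the transitions between such levels. -/
def bohrPairs (E : K → ℝ) (ω : ℝ) : Set (K × K) :=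
  {p | E p.2 - E p.1 = ω}

theorem swap_mem_bohrPairs_neg_iff {E : K → ℝ} {ω : ℝ} {p : K × K} :
    p.swap ∈ bohrPairs E (-ω) ↔ p ∈ bohrPairs E ω := by
  simp only [bohrPairs, Set.mem_ofPred_eq, Prod.fst_swap, Prod.snd_swap, ← neg_sub (E p.2), neg_inj]

end BohrPairs

section BathCorrelation

variable {K R M : Type*} [Semigroup R] [AddCommMonoid M] [Module ℝ M]

/-- The contribution of a pair of levels to the unnormalized thermal correlation of `a` and `b`
at inverse temperature `β`. Here `τ` plays the role of the trace and `Q k` that of the spectral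
projection of the level `k`. -/
noncomputable def bathCorrelationTerm (τ : R → M) (E : K → ℝ) (Q : K → R) (β : ℝ) (a b : R)
    (p : K × K) : M :=
  Real.exp (-(β * E p.1)) • τ (Q p.1 * a * Q p.2 * b)

theorem bathCorrelationTerm_swap {τ : R → M} (hτ : ∀ x y, τ (x * y) = τ (y * x)) {E : K → ℝ}
    (Q : K → R) (β : ℝ) (a b : R) {ω : ℝ} {p : K × K} (hp : p ∈ bohrPairs E ω) :
    bathCorrelationTerm τ E Q β a b p.swap =
      Real.exp (-(β * ω)) • bathCorrelationTerm τ E Q β b a p := by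
  have boltzmann :
      Real.exp (-(β * E p.2)) = Real.exp (-(β * ω)) * Real.exp (-(β * E p.1)) := by
    rw [← Real.exp_add, ← show E p.2 - E p.1 = ω from hp]
    ring_nf
  simp only [bathCorrelationTerm, Prod.fst_swap, Prod.snd_swap]
  rw [boltzmann, mul_smul, tracial_mul_mul_mul_comm hτ]

variable [TopologicalSpace M]

/-- `g` is the Fourier coefficient at frequency `ω` of the unnormalized thermal correlation function
of `a` and `b`. Phrasing it with `HasSum` allows infinitely many levels while keeping the junk value
of a divergent series out. -/
def HasBathCorrelationCoeff (τ : R → M) (E : K → ℝ) (Q : K → R) (β : ℝ) (a b : R) (ω : ℝ)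
    (g : M) : Prop :=
  HasSum (fun p : bohrPairs E ω => bathCorrelationTerm τ E Q β a b p) g

theorem hasBathCorrelationCoeff_sum [Fintype K] (τ : R → M) (E : K → ℝ) (Q : K → R) (β : ℝ)
    (a b : R) (ω : ℝ) :
    HasBathCorrelationCoeff τ E Q β a b ω
      (∑ p : K × K with E p.2 - E p.1 = ω, bathCorrelationTerm τ E Q β a b p) := by
  have pairs_eq : bohrPairs E ω = ↑({p : K × K | E p.2 - E p.1 = ω} : Finset (K × K)) := by
    ext p
    simp [bohrPairs]
  rw [HasBathCorrelationCoeff, pairs_eq]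
  exact Finset.hasSum _ _

theorem kms_condition_finite_bath_general [ContinuousConstSMul ℝ M] {τ : R → M}
    (hτ : ∀ x y, τ (x * y) = τ (y * x)) {E : K → ℝ} {Q : K → R} {β : ℝ} {a b : R} {ω : ℝ} {g : M}
    (hg : HasBathCorrelationCoeff τ E Q β b a ω g) :
    HasBathCorrelationCoeff τ E Q β a b (-ω) (Real.exp (-(β * ω)) • g) := by
  let swapPairs : bohrPairs E ω ≃ bohrPairs E (-ω) :=
    (Equiv.prodComm K K).subtypeEquiv fun _ => swap_mem_bohrPairs_neg_iff.symm
  refine swapPairs.hasSum_iff.mp ((hg.const_smul _).congr_fun fun p => ?_)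
  exact bathCorrelationTerm_swap hτ Q β a b p.2

end BathCorrelation

/-- KMS condition for the Fourier coefficients of thermal bath correlation
functions (finite-dimensional bath): with
`γ α β ω = ∑_{(k,l) : E l − E k = ω} e^{−β E k} Tr (Q k * B α * Q l * B β)`,
one has `γ α β (−ω) = e^{−βω} γ β α ω` for all real `ω`. -/
theorem kms_condition_finite_bath {m : ℕ} (hm : 0 < m)
    {K : Type*} [Fintype K] (E : K → ℝ) (hE : Function.Injective E)
    (Q : K → Matrix (Fin m) (Fin m) ℂ)
    (hQherm : ∀ k : K, (Q k)ᴴ = Q k)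
    (hQorth : ∀ k l : K, k ≠ l → Q k * Q l = 0)
    (hQidem : ∀ k : K, Q k * Q k = Q k)
    (hQsum : ∑ k : K, Q k = 1)
    {ι : Type*} [Fintype ι] (B : ι → Matrix (Fin m) (Fin m) ℂ)
    (hBherm : ∀ α : ι, (B α)ᴴ = B α)
    (β : ℝ)
    (γ : ℝ → ι → ι → ℂ)
    (hγ : ∀ (ω : ℝ) (α β' : ι), γ ω α β' =
      ∑ p ∈ Finset.univ.filter (fun p : K × K => E p.2 - E p.1 = ω),
        (Real.exp (-(β * E p.1)) : ℂ) *
          Matrix.trace (Q p.1 * B α * Q p.2 * B β')) :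
    ∀ (ω : ℝ) (α β' : ι), γ (-ω) α β' = (Real.exp (-(β * ω)) : ℂ) * γ ω β' α := by
  have hcoeff (ω : ℝ) (α β' : ι) :
      HasBathCorrelationCoeff Matrix.trace E Q β (B α) (B β') ω (γ ω α β') := by
    simpa only [hγ, bathCorrelationTerm, Complex.real_smul] using
      hasBathCorrelationCoeff_sum Matrix.trace E Q β (B α) (B β') ω
  intro ω α β'
  exact (hcoeff (-ω) α β').unique
    (kms_condition_finite_bath_general Matrix.trace_mul_comm (hcoeff ω β' α))
end

section
/- Positive semidefiniteness of the dissipation-rate matrix: for each ω ∈ ℝ, the ι×ι matrix γ(ω) with entries γ_{αβ}(ω) = ∑_{(k,l) with E_l − E_k = ω} w_k · Tr( Q_k · B_αᴴ · Q_l · B_β ) is positive semidefinite (in particular Hermitian, and ∑_{α,β} conj(z_α)·γ_{αβ}(ω)·z_β ≥ 0 for every z : ι → ℂ). -/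
open scoped Matrix ComplexOrder

/-!
Vectorization turns `Tr (P * Xᴴ * S * Y)` into the sesquilinear form `⟨vec X, (Pᵀ ⊗ S) vec Y⟩`,
and `Pᵀ ⊗ S` is positive semidefinite whenever `P` and `S` are. Each pair `(k, l)` therefore
contributes a generalized Gram matrix of the vectors `vec (B α)`, and these are summed with
nonnegative weights.
-/

section

open Matrix
open scoped Kronecker

variable {m n ι R : Type*} [Fintype m] [Fintype n]

theorem star_vec_dotProduct_kronecker_mulVec_vec [NonUnitalCommSemiring R] [Star R]
    (P : Matrix m m R) (S : Matrix n n R) (X Y : Matrix n m R) :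
    star (vec X) ⬝ᵥ ((Pᵀ ⊗ₖ S) *ᵥ vec Y) = trace (P * Xᴴ * S * Y) := by
  rw [kronecker_mulVec_vec, transpose_transpose, star_vec_dotProduct_vec, ← Matrix.mul_assoc,
    trace_mul_comm]
  simp only [Matrix.mul_assoc]

theorem posSemidef_star_dotProduct_mulVec [Finite ι] [Ring R] [PartialOrder R] [StarRing R]
    {M : Matrix n n R} (hM : M.PosSemidef) (v : ι → n → R) :
    (of fun α β => star (v α) ⬝ᵥ (M *ᵥ v β)).PosSemidef := by
  convert hM.conjTranspose_mul_mul_same (of v)ᵀ using 1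
  ext α β
  rw [Matrix.mul_assoc]
  rfl

variable {𝕜 : Type*} [RCLike 𝕜] [Finite ι]

theorem posSemidef_trace_mul_conjTranspose_mul_mul {P : Matrix m m 𝕜} {S : Matrix n n 𝕜}
    (hP : P.PosSemidef) (hS : S.PosSemidef) (B : ι → Matrix n m 𝕜) :
    (of fun α β => trace (P * (B α)ᴴ * S * B β)).PosSemidef := by
  simpa only [star_vec_dotProduct_kronecker_mulVec_vec] using
    posSemidef_star_dotProduct_mulVec (hP.transpose.kronecker hS) fun α => vec (B α)

theorem dissipation_matrix_posSemidef_general {K : Type*} {Q : K → Matrix m m 𝕜}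
    (hQ : ∀ k, (Q k).PosSemidef) (s : Finset (K × K)) {w : K × K → 𝕜} (hw : ∀ p ∈ s, 0 ≤ w p)
    (B : ι → Matrix m m 𝕜) :
    (of fun α β => ∑ p ∈ s, w p * trace (Q p.1 * (B α)ᴴ * Q p.2 * B β)).PosSemidef := by
  have hsum := posSemidef_sum s fun p hp =>
    (posSemidef_trace_mul_conjTranspose_mul_mul (hQ p.1) (hQ p.2) B).smul (hw p hp)
  convert hsum using 1
  ext α β
  simp only [of_apply, Matrix.sum_apply, Matrix.smul_apply, smul_eq_mul]

end

/-- Positive semidefiniteness of the dissipation-rate matrix: for each `ω ∈ ℝ`,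
the `ι × ι` matrix with entries
`γ α β = ∑_{(k,l) : E l − E k = ω} w k * Tr (Q k * (B α)ᴴ * Q l * B β)`
is positive semidefinite. -/
theorem dissipation_matrix_posSemidef {m : ℕ} (hm : 0 < m)
    {K : Type*} [Fintype K] (E : K → ℝ)
    (Q : K → Matrix (Fin m) (Fin m) ℂ)
    (hQherm : ∀ k : K, (Q k)ᴴ = Q k)
    (hQorth : ∀ k l : K, k ≠ l → Q k * Q l = 0)
    (hQidem : ∀ k : K, Q k * Q k = Q k)
    (w : K → ℝ) (hw : ∀ k : K, 0 ≤ w k)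
    {ι : Type*} [Fintype ι] (B : ι → Matrix (Fin m) (Fin m) ℂ)
    (ω : ℝ) :
    Matrix.PosSemidef (Matrix.of fun α β' : ι =>
      ∑ p ∈ Finset.univ.filter (fun p : K × K => E p.2 - E p.1 = ω),
        (w p.1 : ℂ) * Matrix.trace (Q p.1 * (B α)ᴴ * Q p.2 * B β')) := by
  open scoped MatrixOrder in
  have hQ (k : K) : (Q k).PosSemidef :=
    Matrix.nonneg_iff_posSemidef.mp (IsStarProjection.nonneg ⟨hQidem k, hQherm k⟩)
  exact dissipation_matrix_posSemidef_general hQ _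
    (fun p _ => Complex.zero_le_real.mpr (hw p.1)) B
end

section
/- Matrix-valued Bochner-type theorem: let C : ℝ → Matrix ι ι ℂ be continuous, with every entry integrable over ℝ, and of positive type in the sense that for every finite family of times t_1,…,t_m ∈ ℝ and vectors z_1,…,z_m : ι → ℂ the number ∑_{i,j=1}^m ∑_{α,β∈ι} conj((z_i)_α) · (C(t_i − t_j))_{αβ} · (z_j)_β is a nonnegative real. Then for every ω ∈ ℝ the matrix γ(ω) with entries γ_{αβ}(ω) = ∫_ℝ e^{iωs} · (C(s))_{αβ} ds is positive semidefinite. -/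
open scoped Matrix ComplexOrder

open MeasureTheory ProbabilityTheory Filter Topology

/-!
For a kernel `K` whose double sums `∑ i, ∑ j, K (t i) (t j)` are all nonnegative, averaging over
`n + 1` independent points with law `μ` gives `0 ≤ (n + 1) • (D + n • ∫ K d(μ × μ))`, where `D` is
the integral over the diagonal; dividing by `n` and letting `n → ∞` removes the diagonal term. For
`K x y = f (x - y)` and Gaussian `μ`, the parallelogram law turns this into
`0 ≤ ∫ exp (-c ‖s‖²) • f s`, hence `0 ≤ ∫ f` as `c → 0`. The matrix statement is the case
`f s = χ s • zᴴ C(s) z`, where the character `χ` can be absorbed into the test vectors.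
-/

theorem nonneg_of_forall_add_nsmul_nonneg {F : Type*} [AddCommGroup F] [Module ℝ F]
    [TopologicalSpace F] [ContinuousAdd F] [ContinuousSMul ℝ F] [PartialOrder F]
    [PosSMulMono ℝ F] [ClosedIciTopology F] {a b : F} (h : ∀ n : ℕ, 0 ≤ a + n • b) :
    0 ≤ b := by
  have hlim : Tendsto (fun n : ℕ => (n : ℝ)⁻¹ • a + b) atTop (𝓝 ((0 : ℝ) • a + b)) :=
    (tendsto_inv_atTop_nhds_zero_nat.smul_const a).add_const b
  rw [zero_smul, zero_add] at hlim
  refine ge_of_tendsto hlim ?_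
  filter_upwards [eventually_ne_atTop 0] with n hn
  calc (0 : F) ≤ (n : ℝ)⁻¹ • (a + n • b) := smul_nonneg (by positivity) (h n)
    _ = (n : ℝ)⁻¹ • a + b := by
      rw [smul_add, ← Nat.cast_smul_eq_nsmul ℝ n b, inv_smul_smul₀ (Nat.cast_ne_zero.2 hn)]

section Kernel

variable {X F : Type*} [MeasurableSpace X]

theorem measurePreserving_eval_prodMk {κ : Type*} [Fintype κ] (μ : Measure X)
    [IsProbabilityMeasure μ] {i j : κ} (hij : i ≠ j) :
    MeasurePreserving (fun t : κ → X => (t i, t j)) (Measure.pi fun _ => μ) (μ.prod μ) where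
  measurable := by fun_prop
  map_eq := by
    have hindep : iIndepFun (fun (k : κ) (t : κ → X) => t k) (Measure.pi fun _ => μ) :=
      iIndepFun_pi (X := fun _ => id) fun _ => aemeasurable_id
    rw [(hindep.indepFun hij).map_prod_eq_prod_map_map (measurable_pi_apply i).aemeasurable
        (measurable_pi_apply j).aemeasurable,
      (measurePreserving_eval _ i).map_eq, (measurePreserving_eval _ j).map_eq]

variable [NormedAddCommGroup F] [NormedSpace ℝ F] {μ : Measure X} {K : X → X → F}

theorem integral_pi_sum_sum_kernel [IsProbabilityMeasure μ]
    (hdiag : Integrable (fun x => K x x) μ)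
    (hK : Integrable (fun p : X × X => K p.1 p.2) (μ.prod μ)) (n : ℕ) :
    ∫ t : Fin (n + 1) → X, ∑ i, ∑ j, K (t i) (t j) ∂(Measure.pi fun _ => μ) =
      (n + 1) • (∫ x, K x x ∂μ + n • ∫ p, K p.1 p.2 ∂(μ.prod μ)) := by
  have hint (i j : Fin (n + 1)) :
      Integrable (fun t : Fin (n + 1) → X => K (t i) (t j)) (Measure.pi fun _ => μ) := by
    obtain rfl | hij := eq_or_ne i j
    · exact integrable_comp_eval (μ := fun _ : Fin (n + 1) => μ) hdiag
    · exact (measurePreserving_eval_prodMk μ hij).integrable_comp_of_integrable hK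
  have hval_diag (i : Fin (n + 1)) :
      ∫ t, K (t i) (t i) ∂(Measure.pi fun _ => μ) = ∫ x, K x x ∂μ :=
    integral_comp_eval (μ := fun _ : Fin (n + 1) => μ) hdiag.1
  have hval_offDiag {i j : Fin (n + 1)} (hij : i ≠ j) :
      ∫ t, K (t i) (t j) ∂(Measure.pi fun _ => μ) = ∫ p, K p.1 p.2 ∂(μ.prod μ) :=
    (measurePreserving_eval_prodMk μ hij).hasLaw.integral_comp hK.1
  have hrow (i : Fin (n + 1)) :
      ∑ j, ∫ t, K (t i) (t j) ∂(Measure.pi fun _ => μ) =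
        ∫ x, K x x ∂μ + n • ∫ p, K p.1 p.2 ∂(μ.prod μ) := by
    rw [Fin.sum_univ_succAbove _ i, hval_diag]
    simp_rw [hval_offDiag (i.succAbove_ne _).symm, Fin.sum_const]
  rw [integral_finsetSum _ fun i _ => integrable_finsetSum _ fun j _ => hint i j]
  simp_rw [integral_finsetSum _ fun j _ => hint _ j, hrow, Fin.sum_const]

variable [PartialOrder F] [IsOrderedAddMonoid F] [IsOrderedModule ℝ F] [ClosedIciTopology F]

theorem integral_prod_self_nonneg_of_isProbabilityMeasure [IsProbabilityMeasure μ]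
    (hpos : ∀ (n : ℕ) (t : Fin n → X), 0 ≤ ∑ i, ∑ j, K (t i) (t j))
    (hdiag : Integrable (fun x => K x x) μ)
    (hK : Integrable (fun p : X × X => K p.1 p.2) (μ.prod μ)) :
    0 ≤ ∫ p, K p.1 p.2 ∂(μ.prod μ) := by
  refine nonneg_of_forall_add_nsmul_nonneg (a := ∫ x, K x x ∂μ) fun n => ?_
  have hmean : 0 ≤ (n + 1) • (∫ x, K x x ∂μ + n • ∫ p, K p.1 p.2 ∂(μ.prod μ)) :=
    integral_pi_sum_sum_kernel hdiag hK n ▸ integral_nonneg fun t => hpos (n + 1) t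
  rw [← Nat.cast_smul_eq_nsmul ℝ] at hmean
  exact (smul_nonneg_iff_nonneg_of_pos_left (by positivity)).1 hmean

theorem integral_prod_self_nonneg [IsFiniteMeasure μ]
    (hpos : ∀ (n : ℕ) (t : Fin n → X), 0 ≤ ∑ i, ∑ j, K (t i) (t j))
    (hdiag : Integrable (fun x => K x x) μ)
    (hK : Integrable (fun p : X × X => K p.1 p.2) (μ.prod μ)) :
    0 ≤ ∫ p, K p.1 p.2 ∂(μ.prod μ) := by
  obtain rfl | hμ := eq_zero_or_neZero μ
  · simp
  set c := (μ Set.univ)⁻¹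
  have hc : c ≠ ⊤ := ENNReal.inv_ne_top.2 (NeZero.ne _)
  have hprod : (c • μ).prod (c • μ) = c • c • μ.prod μ := by
    rw [Measure.prod_smul_left, Measure.prod_smul_right]
  have hnonneg : 0 ≤ ∫ p, K p.1 p.2 ∂((c • μ).prod (c • μ)) :=
    integral_prod_self_nonneg_of_isProbabilityMeasure hpos (hdiag.smul_measure hc)
      (hprod ▸ (hK.smul_measure hc).smul_measure hc)
  have hc_pos : 0 < c.toReal := ENNReal.toReal_pos (by simp [c]) hc
  rwa [hprod, integral_smul_measure, integral_smul_measure,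
    smul_nonneg_iff_nonneg_of_pos_left hc_pos, smul_nonneg_iff_nonneg_of_pos_left hc_pos]
    at hnonneg

theorem integral_prod_self_mul_smul_nonneg [SFinite μ] {w : X → ℝ} (hw_nonneg : ∀ x, 0 ≤ w x)
    (hw : Integrable w μ) (hpos : ∀ (n : ℕ) (t : Fin n → X), 0 ≤ ∑ i, ∑ j, K (t i) (t j))
    (hdiag : Integrable (fun x => w x • K x x) μ)
    (hK : Integrable (fun p : X × X => (w p.1 * w p.2) • K p.1 p.2) (μ.prod μ)) :
    0 ≤ ∫ p, (w p.1 * w p.2) • K p.1 p.2 ∂(μ.prod μ) := by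
  set ρ : X → ENNReal := fun x => ENNReal.ofReal (w x)
  set ρ₂ : X × X → ENNReal := fun p => ENNReal.ofReal (w p.1 * w p.2)
  have hρ : AEMeasurable ρ μ := hw.1.aemeasurable.ennreal_ofReal
  have hρ₂ : AEMeasurable ρ₂ (μ.prod μ) := (hw.mul_prod hw).1.aemeasurable.ennreal_ofReal
  have hρ_lt_top : ∀ᵐ x ∂μ, ρ x < ⊤ := ae_of_all _ fun _ => ENNReal.ofReal_lt_top
  have hρ₂_lt_top : ∀ᵐ p ∂(μ.prod μ), ρ₂ p < ⊤ := ae_of_all _ fun _ => ENNReal.ofReal_lt_top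
  have hρ_toReal (x : X) : (ρ x).toReal = w x := ENNReal.toReal_ofReal (hw_nonneg x)
  have hρ₂_toReal (p : X × X) : (ρ₂ p).toReal = w p.1 * w p.2 :=
    ENNReal.toReal_ofReal (mul_nonneg (hw_nonneg _) (hw_nonneg _))
  have : IsFiniteMeasure (μ.withDensity ρ) := isFiniteMeasure_withDensity_ofReal hw.2
  have hprod : (μ.withDensity ρ).prod (μ.withDensity ρ) = (μ.prod μ).withDensity ρ₂ := by
    rw [prod_withDensity₀ hρ hρ]
    simp_rw [ρ, ρ₂, ENNReal.ofReal_mul (hw_nonneg _)]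
  have hnonneg : 0 ≤ ∫ p, K p.1 p.2 ∂((μ.withDensity ρ).prod (μ.withDensity ρ)) := by
    refine integral_prod_self_nonneg hpos ?_ ?_
    · simpa only [integrable_withDensity_iff_integrable_smul₀' hρ hρ_lt_top, hρ_toReal] using hdiag
    · simpa only [hprod, integrable_withDensity_iff_integrable_smul₀' hρ₂ hρ₂_lt_top, hρ₂_toReal]
        using hK
  simpa only [hprod, integral_withDensity_eq_integral_toReal_smul₀ hρ₂ hρ₂_lt_top, hρ₂_toReal]
    using hnonneg

end Kernel

section Autocorrelation

variable {G F : Type*} [AddGroup G] [MeasurableSpace G] [MeasurableAdd₂ G]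
  [NormedAddCommGroup F] [NormedSpace ℝ F] {μ : Measure G} [SFinite μ] [μ.IsAddRightInvariant]
  {w : G → ℝ} {f : G → F} {B : ℝ}

theorem integrable_autocorrelation_smul (hw : Integrable w μ) (hB : ∀ x, ‖w x‖ ≤ B)
    (hf : Integrable f μ) :
    Integrable (fun p : G × G => (w (p.1 + p.2) * w p.2) • f p.1) (μ.prod μ) := by
  have hw_add : AEStronglyMeasurable (fun p : G × G => w (p.1 + p.2)) (μ.prod μ) :=
    hw.1.comp_fst.comp_measurePreserving (measurePreserving_add_prod μ μ)
  simp_rw [mul_smul]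
  exact (hw.smul_prod hf).swap.bdd_smul B hw_add (ae_of_all _ fun p => hB (p.1 + p.2))

theorem integral_autocorrelation_smul_nonneg [MeasurableNeg G] [CompleteSpace F]
    [PartialOrder F] [IsOrderedAddMonoid F] [IsOrderedModule ℝ F] [ClosedIciTopology F]
    (hw_nonneg : ∀ x, 0 ≤ w x) (hw : Integrable w μ) (hB : ∀ x, ‖w x‖ ≤ B) (hf : Integrable f μ)
    (hpos : ∀ (n : ℕ) (t : Fin n → G), 0 ≤ ∑ i, ∑ j, f (t i - t j)) :
    0 ≤ ∫ s, (∫ y, w (s + y) * w y ∂μ) • f s ∂μ := by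
  have hshear := integrable_autocorrelation_smul hw hB hf
  have hint : Integrable (fun p : G × G => (w p.1 * w p.2) • f (p.1 - p.2)) (μ.prod μ) := by
    simpa [Function.comp_def] using
      (measurePreserving_sub_prod μ μ).integrable_comp_of_integrable hshear
  calc (0 : F) ≤ ∫ p, (w p.1 * w p.2) • f (p.1 - p.2) ∂(μ.prod μ) :=
        integral_prod_self_mul_smul_nonneg (K := fun x y => f (x - y)) hw_nonneg hw hpos
          (by simpa using hw.smul_const (f 0)) hint
    _ = ∫ p, (w (p.1 + p.2) * w p.2) • f p.1 ∂(μ.prod μ) := by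
      simpa [Function.comp_def] using
        (measurePreserving_sub_prod μ μ).hasLaw.integral_comp hshear.1
    _ = ∫ s, (∫ y, w (s + y) * w y ∂μ) • f s ∂μ := by
      rw [integral_prod _ hshear]
      simp_rw [integral_smul_const]

end Autocorrelation

section Gaussian

theorem exp_neg_mul_sq_norm_add_mul_exp {V : Type*} [NormedAddCommGroup V]
    [InnerProductSpace ℝ V] (c : ℝ) (s y : V) :
    Real.exp (-(2 * c) * ‖s + y‖ ^ 2) * Real.exp (-(2 * c) * ‖y‖ ^ 2) =
      Real.exp (-(4 * c) * ‖y + (2⁻¹ : ℝ) • s‖ ^ 2) * Real.exp (-c * ‖s‖ ^ 2) := by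
  have hparallelogram := parallelogram_law_with_norm ℝ (y + (2⁻¹ : ℝ) • s) ((2⁻¹ : ℝ) • s)
  have hadd : y + (2⁻¹ : ℝ) • s + (2⁻¹ : ℝ) • s = s + y := by module
  have hhalf : ‖(2⁻¹ : ℝ) • s‖ = 2⁻¹ * ‖s‖ := by simp [norm_smul]
  rw [hadd, add_sub_cancel_right, hhalf] at hparallelogram
  rw [← Real.exp_add, ← Real.exp_add]
  congr 1
  linear_combination (-(2 * c)) * hparallelogram

variable {V F : Type*} [NormedAddCommGroup V] [InnerProductSpace ℝ V] [FiniteDimensional ℝ V]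
  [MeasurableSpace V] [BorelSpace V] [NormedAddCommGroup F] [CompleteSpace F] [PartialOrder F]
  [IsOrderedAddMonoid F] [ClosedIciTopology F] {f : V → F}

theorem integrable_exp_neg_mul_sq_norm {b : ℝ} (hb : 0 < b) :
    Integrable fun v : V => Real.exp (-b * ‖v‖ ^ 2) := by
  have h := (GaussianFourier.integrable_cexp_neg_mul_sq_norm_add (V := V) (b := b)
    (by simpa using hb) 0 0).norm
  simpa [Complex.norm_exp, ← Complex.ofReal_pow] using h

theorem integral_exp_neg_mul_sq_norm_smul_nonneg [NormedSpace ℝ F] [IsOrderedModule ℝ F]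
    (hf : Integrable f) (hpos : ∀ (n : ℕ) (t : Fin n → V), 0 ≤ ∑ i, ∑ j, f (t i - t j))
    {c : ℝ} (hc : 0 < c) : 0 ≤ ∫ s, Real.exp (-c * ‖s‖ ^ 2) • f s := by
  have hauto (s : V) : ∫ y, Real.exp (-(2 * c) * ‖s + y‖ ^ 2) * Real.exp (-(2 * c) * ‖y‖ ^ 2) =
      (∫ y : V, Real.exp (-(4 * c) * ‖y‖ ^ 2)) * Real.exp (-c * ‖s‖ ^ 2) := by
    simp_rw [exp_neg_mul_sq_norm_add_mul_exp, integral_mul_const]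
    rw [integral_add_right_eq_self fun y : V => Real.exp (-(4 * c) * ‖y‖ ^ 2)]
  have hle_one (v : V) : ‖Real.exp (-(2 * c) * ‖v‖ ^ 2)‖ ≤ 1 := by
    rw [Real.norm_of_nonneg (Real.exp_nonneg _), Real.exp_le_one_iff, neg_mul, neg_nonpos]
    positivity
  have hnonneg := integral_autocorrelation_smul_nonneg
    (fun _ => Real.exp_nonneg _) (integrable_exp_neg_mul_sq_norm (by positivity)) hle_one hf hpos
  simp_rw [hauto, mul_smul, integral_smul] at hnonneg
  have hmass : 0 < ∫ y : V, Real.exp (-(4 * c) * ‖y‖ ^ 2) :=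
    integral_exp_pos (integrable_exp_neg_mul_sq_norm (by positivity))
  exact (smul_nonneg_iff_nonneg_of_pos_left hmass).1 hnonneg

theorem integral_nonneg_of_sum_sum_sub_nonneg [NormedSpace ℂ F] [IsOrderedModule ℝ F]
    (hf : Integrable f) (hpos : ∀ (n : ℕ) (t : Fin n → V), 0 ≤ ∑ i, ∑ j, f (t i - t j)) :
    0 ≤ ∫ s, f s := by
  refine ge_of_tendsto (Real.tendsto_integral_cexp_sq_smul hf) ?_
  filter_upwards [eventually_gt_atTop 0] with R hR
  have h := integral_exp_neg_mul_sq_norm_smul_nonneg hf hpos (inv_pos.2 hR)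
  simpa [← Complex.coe_smul] using h

end Gaussian

section Matrix

variable {ι : Type*} [Fintype ι]

theorem posSemidef_of_dotProduct_mulVec_nonneg {M : Matrix ι ι ℂ}
    (hM : ∀ z : ι → ℂ, 0 ≤ star z ⬝ᵥ M *ᵥ z) : M.PosSemidef := by
  classical
  rw [← Matrix.isPositive_toEuclideanLin_iff, LinearMap.isPositive_iff_complex]
  intro x
  have hinner : inner ℂ (M.toEuclideanLin x) x = star (star x.ofLp ⬝ᵥ M *ᵥ x.ofLp) := by
    rw [← inner_conj_symm]
    simp [EuclideanSpace.inner_eq_star_dotProduct, dotProduct_comm]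
  obtain ⟨hre, him⟩ := RCLike.nonneg_iff.1 (hinner ▸ star_nonneg_iff.2 (hM x.ofLp))
  exact ⟨Complex.ext rfl him.symm, hre⟩

section Integral

variable {κ X : Type*} [Fintype κ] [MeasurableSpace X] {μ : Measure X} {M : X → Matrix ι κ ℂ}

theorem integrable_dotProduct_mulVec (hM : ∀ α β, Integrable (fun x => M x α β) μ)
    (u : ι → ℂ) (v : κ → ℂ) : Integrable (fun x => u ⬝ᵥ M x *ᵥ v) μ :=
  integrable_finsetSum _ fun α _ =>
    (integrable_finsetSum _ fun β _ => (hM α β).mul_const _).const_mul _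

theorem integral_dotProduct_mulVec (hM : ∀ α β, Integrable (fun x => M x α β) μ)
    (u : ι → ℂ) (v : κ → ℂ) :
    ∫ x, u ⬝ᵥ M x *ᵥ v ∂μ = u ⬝ᵥ (Matrix.of fun α β => ∫ x, M x α β ∂μ) *ᵥ v := by
  have hrow (α : ι) (β : κ) : Integrable (fun x => M x α β * v β) μ := (hM α β).mul_const _
  simp only [dotProduct, Matrix.mulVec, Matrix.of_apply]
  rw [integral_finsetSum _ fun α _ =>
    (integrable_finsetSum _ fun β _ => hrow α β).const_mul _]
  simp_rw [integral_const_mul, integral_finsetSum _ fun β _ => hrow _ β, integral_mul_const]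

end Integral

/-- A matrix-valued function of positive type on a group: all block matrices `(C (t i - t j))` are
positive semidefinite. As `≤` is the order of `ℂ`, each sum is in particular real. -/
def IsPositiveType {G : Type*} [Sub G] (C : G → Matrix ι ι ℂ) : Prop :=
  ∀ (m : ℕ) (t : Fin m → G) (z : Fin m → ι → ℂ),
    0 ≤ ∑ i : Fin m, ∑ j : Fin m, ∑ α : ι, ∑ β : ι,
      (starRingEnd ℂ) (z i α) * C (t i - t j) α β * z j β

namespace IsPositiveType

theorem sum_dotProduct_mulVec_nonneg {G : Type*} [Sub G] {C : G → Matrix ι ι ℂ}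
    (hC : IsPositiveType C) {m : ℕ} (t : Fin m → G) (z : Fin m → ι → ℂ) :
    0 ≤ ∑ i, ∑ j, star (z i) ⬝ᵥ C (t i - t j) *ᵥ z j := by
  simpa [dotProduct, Matrix.mulVec, Finset.mul_sum, mul_assoc] using hC m t z

theorem char_smul {G : Type*} [AddCommGroup G] {C : G → Matrix ι ι ℂ}
    (hC : IsPositiveType C) (χ : AddChar G Circle) :
    IsPositiveType fun s => (χ s : ℂ) • C s := by
  intro m t z
  refine (hC m t fun i α => (starRingEnd ℂ) (χ (t i)) * z i α).trans_eq ?_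
  refine Fintype.sum_congr _ _ fun i => Fintype.sum_congr _ _ fun j =>
    Fintype.sum_congr _ _ fun α => Fintype.sum_congr _ _ fun β => ?_
  have hχ : (χ (t i - t j) : ℂ) = χ (t i) * (starRingEnd ℂ) (χ (t j)) := by
    rw [AddChar.map_sub_eq_div, div_eq_mul_inv, Circle.coe_mul, Circle.coe_inv_eq_conj]
  simp only [Matrix.smul_apply, smul_eq_mul, hχ, map_mul, Complex.conj_conj]
  ring

variable {V : Type*} [NormedAddCommGroup V] [InnerProductSpace ℝ V] [FiniteDimensional ℝ V]
  [MeasurableSpace V] [BorelSpace V] {C : V → Matrix ι ι ℂ}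

theorem posSemidef_integral (hC : IsPositiveType C) (hint : ∀ α β, Integrable fun s => C s α β) :
    (Matrix.of fun α β => ∫ s, C s α β).PosSemidef := by
  refine posSemidef_of_dotProduct_mulVec_nonneg fun z => ?_
  rw [← integral_dotProduct_mulVec hint]
  exact integral_nonneg_of_sum_sum_sub_nonneg (integrable_dotProduct_mulVec hint _ _)
    fun _ t => hC.sum_dotProduct_mulVec_nonneg t fun _ => z

end IsPositiveType

theorem matrix_bochner_posSemidef_general {V : Type*} [NormedAddCommGroup V]
    [InnerProductSpace ℝ V] [FiniteDimensional ℝ V] [MeasurableSpace V] [BorelSpace V]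
    {C : V → Matrix ι ι ℂ} (hint : ∀ α β, Integrable fun s => C s α β) (hC : IsPositiveType C)
    {χ : AddChar V Circle} (hχ : Continuous χ) :
    (Matrix.of fun α β => ∫ s, (χ s : ℂ) * C s α β).PosSemidef :=
  (hC.char_smul χ).posSemidef_integral fun α β =>
    (hint α β).bdd_mul (by fun_prop) (ae_of_all _ fun s => (Circle.norm_coe (χ s)).le)

end Matrix

/-- Matrix-valued Bochner-type theorem: if `C : ℝ → Matrix ι ι ℂ` is
continuous, entrywise integrable, and of positive type, then for every `ω ∈ ℝ` the matrix of
Fourier coefficients `γ α β = ∫ s, e^{iωs} (C s) α β` is positive semidefinite. -/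
theorem matrix_bochner_posSemidef {ι : Type*} [Fintype ι]
    (C : ℝ → Matrix ι ι ℂ) (hcont : Continuous C)
    (hint : ∀ α β : ι, MeasureTheory.Integrable (fun s : ℝ => C s α β))
    (hpos : ∀ (m : ℕ) (t : Fin m → ℝ) (z : Fin m → ι → ℂ),
      0 ≤ ∑ i : Fin m, ∑ j : Fin m, ∑ α : ι, ∑ β : ι,
        (starRingEnd ℂ) (z i α) * C (t i - t j) α β * z j β) :
    ∀ ω : ℝ, Matrix.PosSemidef (Matrix.of fun α β : ι =>
      ∫ s : ℝ, Complex.exp (Complex.I * ω * s) * C s α β) := by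
  intro ω
  have hγ := matrix_bochner_posSemidef_general hint hpos
    (χ := Real.probChar.compAddMonoidHom (AddMonoidHom.mulLeft ω))
    (Real.continuous_probChar.comp (continuous_const_mul ω))
  simpa [Real.probChar_apply, mul_comm, mul_left_comm] using hγ
end

section
/- Finite-dimensional secular averaging theorem with a nearly degenerate Hamiltonian (core of the unified weak-coupling limit): for λ > 0 let L_λ be the superoperator L_λ(ρ) = −i·((H₀+λ²·δH)·ρ − ρ·(H₀+λ²·δH)) on complex n×n matrices, let K be any linear map on complex n×n matrices, and let K^sec = ∑_{ω∈F⁰} Π_ω ∘ K ∘ Π_ω be its secular part, where F⁰ = {ε_k − ε_l : k,l ∈ K} and Π_ω(X) = ∑_{(k,l) with ε_k − ε_l = ω} P_l · X · P_k. Then for every n×n matrix ρ and every τ₁ > 0, lim_{λ→0⁺} sup{ ‖exp(t·(L_λ + λ²·K))(ρ) − exp(t·(L_λ + λ²·K^sec))(ρ)‖ : t ≥ 0, λ²·t ≤ τ₁ } = 0, where exp denotes the exponential of linear endomorphisms of Matrix n n ℂ and ‖·‖ is the Frobenius norm. -/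
open scoped Matrix

attribute [local instance] Matrix.frobeniusNormedAddCommGroup Matrix.frobeniusNormedSpace

/-!
The Liouvillian `L` of `H₀` is diagonalised by the projections `Π_ω`, with imaginary eigenvalues
`i ω`, so `exp (t L)` is bounded uniformly in `t`, and by Gronwall it stays bounded under a
perturbation of size `s = λ²` as long as `s t` is bounded. The commutator with `L` is invertible on
off-diagonal blocks: `S = ∑_{ω ≠ ν} (i (ν - ω))⁻¹ Π_ω K Π_ν` solves `S L - L S = K - K^sec`. Hence
`T = 1 + s S` intertwines the two perturbed generators up to `O(s²)`, and Duhamel's formula over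
times `t = O(1 / s)` turns this into an `O(s)` bound on the difference of the semigroups.
-/

section ExpPerturbation

open NormedSpace (exp)

variable {𝔸 : Type*} [NormedRing 𝔸] [NormedAlgebra ℝ 𝔸] [CompleteSpace 𝔸]

lemma exp_smul_mul_exp_neg_smul (a : 𝔸) (t : ℝ) : exp (t • a) * exp ((-t) • a) = 1 := by
  let _ : NormedAlgebra ℚ 𝔸 := .restrictScalars ℚ ℝ 𝔸
  rw [neg_smul, ← NormedSpace.exp_add_of_commute (Commute.refl (t • a)).neg_right, add_neg_cancel,
    NormedSpace.exp_zero]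

lemma hasDerivAt_exp_sub_smul_mul_mul_exp_smul (a b T : 𝔸) (t u : ℝ) :
    HasDerivAt (fun u : ℝ ↦ exp ((t - u) • a) * T * exp (u • b))
      (-(exp ((t - u) • a) * (a * T - T * b) * exp (u • b))) u := by
  have hleft : HasDerivAt (fun u : ℝ ↦ exp ((t - u) • a)) (-(exp ((t - u) • a) * a)) u := by
    simpa only [neg_smul, one_smul, Function.comp_def, id] using
      (hasDerivAt_exp_smul_const (𝕂 := ℝ) a (t - u)).scomp u ((hasDerivAt_id u).const_sub t)
  have hright : HasDerivAt (fun u : ℝ ↦ exp (u • b)) (b * exp (u • b)) u :=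
    hasDerivAt_exp_smul_const' (𝕂 := ℝ) b u
  exact ((hleft.mul_const T).mul hright).congr_deriv (by noncomm_ring)

lemma norm_exp_smul_mul_sub_mul_exp_smul_le {a b T : 𝔸} {t x y : ℝ} (ht : 0 ≤ t)
    (ha : ∀ u ∈ Set.Icc 0 t, ‖exp (u • a)‖ ≤ x) (hb : ∀ u ∈ Set.Icc 0 t, ‖exp (u • b)‖ ≤ y) :
    ‖exp (t • a) * T - T * exp (t • b)‖ ≤ x * ‖a * T - T * b‖ * y * t := by
  have hbound := norm_image_sub_le_of_norm_deriv_le_segment' (C := x * ‖a * T - T * b‖ * y)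
    (fun u _ ↦ (hasDerivAt_exp_sub_smul_mul_mul_exp_smul a b T t u).hasDerivWithinAt)
    (fun u hu ↦ by
      rw [norm_neg]
      have hx := ha (t - u) ⟨by linarith [hu.2], by linarith [hu.1]⟩
      exact norm_mul_le_of_le (norm_mul_le_of_le hx le_rfl) (hb u ⟨hu.1, hu.2.le⟩))
    t ⟨ht, le_rfl⟩
  simpa only [sub_self, zero_smul, NormedSpace.exp_zero, one_mul, mul_one, sub_zero,
    norm_sub_rev (T * _)] using hbound

lemma norm_exp_smul_add_le {L : 𝔸} {C : ℝ} (hC : ∀ u : ℝ, ‖exp (u • L)‖ ≤ C) (M : 𝔸) {t : ℝ}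
    (ht : 0 ≤ t) :
    ‖exp (t • (L + M))‖ ≤ C * (‖(1 : 𝔸)‖ * Real.exp (C * ‖M‖ * C * t)) := by
  have hC0 : 0 ≤ C := (norm_nonneg _).trans (hC 0)
  -- the propagator in the interaction picture, with generator `exp (-u L) M exp (u L)`
  let W : ℝ → 𝔸 := fun u ↦ exp ((-u) • L) * exp (u • (L + M))
  have exp_mul_W (u : ℝ) : exp (u • L) * W u = exp (u • (L + M)) := by
    rw [← mul_assoc, exp_smul_mul_exp_neg_smul, one_mul]
  have hW (u : ℝ) : HasDerivAt W (exp ((-u) • L) * M * exp (u • L) * W u) u := by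
    rw [mul_assoc, exp_mul_W]
    simpa [W] using hasDerivAt_exp_sub_smul_mul_mul_exp_smul L (L + M) 1 0 u
  have hgronwall : ‖W t‖ ≤ gronwallBound ‖(1 : 𝔸)‖ (C * ‖M‖ * C) 0 (t - 0) :=
    norm_le_gronwallBound_of_norm_deriv_right_le
      (fun u _ ↦ (hW u).continuousAt.continuousWithinAt) (fun u _ ↦ (hW u).hasDerivWithinAt)
      (by simp [W])
      (fun u _ ↦ by
        rw [add_zero]
        exact norm_mul_le_of_le (norm_mul_le_of_le (norm_mul_le_of_le (hC _) le_rfl) (hC u)) le_rfl)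
      t ⟨ht, le_rfl⟩
  rw [gronwallBound_ε0, sub_zero] at hgronwall
  calc ‖exp (t • (L + M))‖ = ‖exp (t • L) * W t‖ := by rw [exp_mul_W]
    _ ≤ ‖exp (t • L)‖ * ‖W t‖ := norm_mul_le _ _
    _ ≤ C * (‖(1 : 𝔸)‖ * Real.exp (C * ‖M‖ * C * t)) := by gcongr; exact hC t

lemma exists_norm_exp_smul_add_smul_le {L : 𝔸} {C : ℝ} (hC : ∀ u : ℝ, ‖exp (u • L)‖ ≤ C)
    (M : 𝔸) (τ : ℝ) :
    ∃ D : ℝ, ∀ s t : ℝ, 0 ≤ s → 0 ≤ t → s * t ≤ τ → ‖exp (t • (L + s • M))‖ ≤ D := by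
  have hC0 : 0 ≤ C := (norm_nonneg _).trans (hC 0)
  refine ⟨C * (‖(1 : 𝔸)‖ * Real.exp (C * ‖M‖ * C * τ)), fun s t hs ht hst ↦ ?_⟩
  calc ‖exp (t • (L + s • M))‖
      ≤ C * (‖(1 : 𝔸)‖ * Real.exp (C * ‖s • M‖ * C * t)) := norm_exp_smul_add_le hC (s • M) ht
    _ = C * (‖(1 : 𝔸)‖ * Real.exp (C * ‖M‖ * C * (s * t))) := by
        rw [norm_smul, Real.norm_of_nonneg hs]; ring_nf
    _ ≤ C * (‖(1 : 𝔸)‖ * Real.exp (C * ‖M‖ * C * τ)) := by gcongr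

end ExpPerturbation

section Averaging

open NormedSpace (exp)

lemma add_smul_mul_one_add_smul_sub {R A : Type*} [CommRing R] [Ring A] [Algebra R A]
    {L M₁ M₂ S : A} (hS : S * L - L * S = M₁ - M₂) (s : R) :
    (L + s • M₁) * (1 + s • S) - (1 + s • S) * (L + s • M₂) = s ^ 2 • (M₁ * S - S * M₂) := by
  have hM₁ : M₁ = S * L - L * S + M₂ := by rw [hS, sub_add_cancel]
  calc (L + s • M₁) * (1 + s • S) - (1 + s • S) * (L + s • M₂)
      = s • (M₁ - (S * L - L * S + M₂)) + s ^ 2 • (M₁ * S - S * M₂) := by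
        simp only [mul_add, add_mul, mul_one, one_mul, smul_sub, mul_smul_comm, smul_mul_assoc,
          smul_smul, smul_add, pow_two]
        abel
    _ = s ^ 2 • (M₁ * S - S * M₂) := by rw [← hM₁, sub_self, smul_zero, zero_add]

lemma exists_norm_exp_sub_exp_le_of_commutator_eq {𝔸 : Type*} [NormedRing 𝔸] [NormedAlgebra ℝ 𝔸]
    [CompleteSpace 𝔸] {L M₁ M₂ S : 𝔸} {C : ℝ} (hC : ∀ u : ℝ, ‖exp (u • L)‖ ≤ C)
    (hS : S * L - L * S = M₁ - M₂) (τ : ℝ) :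
    ∃ C' : ℝ, ∀ s t : ℝ, 0 ≤ s → 0 ≤ t → s * t ≤ τ →
      ‖exp (t • (L + s • M₁)) - exp (t • (L + s • M₂))‖ ≤ C' * s := by
  obtain ⟨D₁, hD₁⟩ := exists_norm_exp_smul_add_smul_le hC M₁ τ
  obtain ⟨D₂, hD₂⟩ := exists_norm_exp_smul_add_smul_le hC M₂ τ
  refine ⟨D₁ * ‖M₁ * S - S * M₂‖ * D₂ * τ + D₁ * ‖S‖ + ‖S‖ * D₂, fun s t hs ht hst ↦ ?_⟩
  set a := L + s • M₁
  set b := L + s • M₂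
  have hsu {u : ℝ} (hu : u ∈ Set.Icc 0 t) : s * u ≤ τ :=
    (mul_le_mul_of_nonneg_left hu.2 hs).trans hst
  have ha : ∀ u ∈ Set.Icc 0 t, ‖exp (u • a)‖ ≤ D₁ := fun u hu ↦ hD₁ s u hs hu.1 (hsu hu)
  have hb : ∀ u ∈ Set.Icc 0 t, ‖exp (u • b)‖ ≤ D₂ := fun u hu ↦ hD₂ s u hs hu.1 (hsu hu)
  have ht_mem : t ∈ Set.Icc 0 t := ⟨ht, le_rfl⟩
  have hD₁0 : 0 ≤ D₁ := (norm_nonneg _).trans (ha t ht_mem)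
  have hD₂0 : 0 ≤ D₂ := (norm_nonneg _).trans (hb t ht_mem)
  have hintertwine :
      ‖exp (t • a) * (1 + s • S) - (1 + s • S) * exp (t • b)‖
        ≤ D₁ * ‖M₁ * S - S * M₂‖ * D₂ * τ * s :=
    calc _ ≤ D₁ * ‖a * (1 + s • S) - (1 + s • S) * b‖ * D₂ * t :=
          norm_exp_smul_mul_sub_mul_exp_smul_le ht ha hb
      _ = D₁ * ‖M₁ * S - S * M₂‖ * D₂ * (s * t) * s := by
          rw [add_smul_mul_one_add_smul_sub hS, norm_smul, Real.norm_of_nonneg (sq_nonneg s)]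
          ring
      _ ≤ D₁ * ‖M₁ * S - S * M₂‖ * D₂ * τ * s := by gcongr
  have hleft : ‖exp (t • a) * S‖ ≤ D₁ * ‖S‖ := norm_mul_le_of_le (ha t ht_mem) le_rfl
  have hright : ‖S * exp (t • b)‖ ≤ ‖S‖ * D₂ := norm_mul_le_of_le le_rfl (hb t ht_mem)
  calc ‖exp (t • a) - exp (t • b)‖
      = ‖exp (t • a) * (1 + s • S) - (1 + s • S) * exp (t • b)
          - s • (exp (t • a) * S) + s • (S * exp (t • b))‖ := by
        congr 1
        simp only [mul_add, add_mul, mul_one, one_mul, mul_smul_comm, smul_mul_assoc]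
        abel
    _ ≤ ‖exp (t • a) * (1 + s • S) - (1 + s • S) * exp (t • b)‖
          + s * ‖exp (t • a) * S‖ + s * ‖S * exp (t • b)‖ := by
        rw [← norm_smul_of_nonneg hs, ← norm_smul_of_nonneg hs]
        exact (norm_add_le _ _).trans (add_le_add_left (norm_sub_le _ _) _)
    _ ≤ D₁ * ‖M₁ * S - S * M₂‖ * D₂ * τ * s + s * (D₁ * ‖S‖) + s * (‖S‖ * D₂) := by gcongr
    _ = (D₁ * ‖M₁ * S - S * M₂‖ * D₂ * τ + D₁ * ‖S‖ + ‖S‖ * D₂) * s := by ring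

end Averaging

section Pinching

variable {ι R A : Type*}

/-- The block-diagonal part `∑ i ∈ s, Q i * M * Q i` of `M` relative to a family of projections
`Q`. For the spectral projections of a Liouvillian this is the secular part of `M`. -/
def pinching [NonUnitalSemiring A] (s : Finset ι) (Q : ι → A) (M : A) : A :=
  ∑ i ∈ s, Q i * M * Q i

-- Dividing the block `Q i * M * Q j` by `μ j - μ i` inverts the commutator with `L` off the
-- diagonal; on the diagonal the quotient is `0` because `0⁻¹ = 0`.
lemma exists_commutator_eq_sub_pinching [Field R] [Ring A] [Algebra R A] {s : Finset ι}
    {μ : ι → R} (hμ : Set.InjOn μ s) {Q : ι → A} {L : A} (hQ : ∑ i ∈ s, Q i = 1)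
    (hLQ : ∀ i ∈ s, L * Q i = μ i • Q i) (hQL : ∀ i ∈ s, Q i * L = μ i • Q i) (M : A) :
    ∃ S : A, S * L - L * S = M - pinching s Q M := by
  classical
  have hM : M = ∑ i ∈ s, ∑ j ∈ s, Q i * M * Q j := by
    simp_rw [← Finset.mul_sum, hQ, mul_one, ← Finset.sum_mul, hQ, one_mul]
  have hpinching : pinching s Q M = ∑ i ∈ s, ∑ j ∈ s, if i = j then Q i * M * Q j else 0 :=
    Finset.sum_congr rfl fun i hi ↦ by rw [Finset.sum_ite_eq, if_pos hi]
  refine ⟨∑ i ∈ s, ∑ j ∈ s, (μ j - μ i)⁻¹ • (Q i * M * Q j), ?_⟩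
  rw [hpinching]
  conv_rhs => lhs; rw [hM]
  simp_rw [Finset.sum_mul, Finset.mul_sum, ← Finset.sum_sub_distrib]
  refine Finset.sum_congr rfl fun i hi ↦ Finset.sum_congr rfl fun j hj ↦ ?_
  have hblock : Q i * M * Q j * L - L * (Q i * M * Q j) = (μ j - μ i) • (Q i * M * Q j) := by
    rw [mul_assoc _ (Q j), hQL j hj, ← mul_assoc L, ← mul_assoc L, hLQ i hi, mul_smul_comm,
      smul_mul_assoc, smul_mul_assoc, ← sub_smul]
  rw [smul_mul_assoc, mul_smul_comm, ← smul_sub, hblock, smul_smul]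
  split_ifs with hij
  · rw [hij, sub_self, mul_zero, zero_smul, sub_self]
  · rw [inv_mul_cancel₀ (sub_ne_zero.2 fun h ↦ hij (hμ hi hj h.symm)), one_smul, sub_zero]

end Pinching

section ImaginarySpectrum

open Complex (I)
open NormedSpace (exp)

variable {ι 𝔸 : Type*} [NormedRing 𝔸] [NormedAlgebra ℂ 𝔸] [CompleteSpace 𝔸]

lemma exp_mul_of_mul_eq_smul {L Q : 𝔸} {z : ℂ} (h : L * Q = z • Q) :
    exp L * Q = Complex.exp z • Q := by
  let _ : NormedAlgebra ℚ 𝔸 := .restrictScalars ℚ ℂ 𝔸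
  have hsemi : SemiconjBy Q (algebraMap ℂ 𝔸 z) L := by
    rw [SemiconjBy, h, ← Algebra.commutes, Algebra.smul_def]
  rw [← hsemi.exp_right.eq, ← NormedSpace.algebraMap_exp_comm, ← Algebra.commutes,
    ← Algebra.smul_def, Complex.exp_eq_exp_ℂ]

lemma norm_exp_smul_le_sum_norm {s : Finset ι} {ω : ι → ℝ} {Q : ι → 𝔸} {L : 𝔸}
    (hQ : ∑ i ∈ s, Q i = 1) (hLQ : ∀ i ∈ s, L * Q i = (I * ω i) • Q i) (t : ℝ) :
    ‖exp (t • L)‖ ≤ ∑ i ∈ s, ‖Q i‖ := by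
  have hspectral : exp (t • L) = ∑ i ∈ s, Complex.exp ((t * ω i : ℝ) * I) • Q i := by
    rw [← mul_one (exp (t • L)), ← hQ, Finset.mul_sum]
    refine Finset.sum_congr rfl fun i hi ↦ exp_mul_of_mul_eq_smul ?_
    rw [smul_mul_assoc, hLQ i hi, ← Complex.coe_smul, smul_smul]
    push_cast
    ring_nf
  rw [hspectral]
  exact norm_sum_le_of_le s fun i _ ↦ by rw [norm_smul, Complex.norm_exp_ofReal_mul_I, one_mul]

theorem exists_norm_exp_sub_exp_pinching_le {s : Finset ι} {ω : ι → ℝ} (hω : Set.InjOn ω s)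
    {Q : ι → 𝔸} {L : 𝔸} (hQ : ∑ i ∈ s, Q i = 1) (hLQ : ∀ i ∈ s, L * Q i = (I * ω i) • Q i)
    (hQL : ∀ i ∈ s, Q i * L = (I * ω i) • Q i) (D M : 𝔸) (τ : ℝ) :
    ∃ C : ℝ, ∀ r t : ℝ, 0 ≤ r → 0 ≤ t → r * t ≤ τ →
      ‖exp (t • (L + r • (D + M))) - exp (t • (L + r • (D + pinching s Q M)))‖ ≤ C * r := by
  have hμ : Set.InjOn (fun i ↦ I * (ω i : ℂ)) s := fun i hi j hj h ↦
    hω hi hj (Complex.ofReal_injective (mul_left_cancel₀ Complex.I_ne_zero h))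
  obtain ⟨S, hS⟩ := exists_commutator_eq_sub_pinching hμ hQ hLQ hQL M
  rw [← add_sub_add_left_eq_sub M _ D] at hS
  exact exists_norm_exp_sub_exp_le_of_commutator_eq (norm_exp_smul_le_sum_norm hQ hLQ) hS τ

end ImaginarySpectrum

section OrthogonalIdempotents

variable {K R B : Type*} [Fintype K] [CommSemiring R] [Semiring B] [Algebra R B] {P : K → B}

lemma sum_smul_mul_of_orthogonalIdempotents (hP : OrthogonalIdempotents P) (c : K → R) (k : K) :
    (∑ j, c j • P j) * P k = c k • P k := by
  classical
  simp_rw [Finset.sum_mul, smul_mul_assoc, hP.mul_eq, smul_ite, smul_zero]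
  simp

lemma mul_sum_smul_of_orthogonalIdempotents (hP : OrthogonalIdempotents P) (c : K → R) (k : K) :
    P k * (∑ j, c j • P j) = c k • P k := by
  classical
  simp_rw [Finset.mul_sum, mul_smul_comm, hP.mul_eq, smul_ite, smul_zero]
  simp

end OrthogonalIdempotents

section Liouvillian

open Complex (I)

variable {A K : Type*} [NormedRing A] [NormedAlgebra ℂ A]

/-- The superoperator `ρ ↦ -i [H, ρ]` generating the unitary evolution with Hamiltonian `H`. It is
bundled as a linear function of `H`. -/
noncomputable def liouvillian : A →ₗ[ℂ] A →L[ℂ] A :=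
  -I • ((ContinuousLinearMap.mul ℂ A).toLinearMap - (ContinuousLinearMap.mul ℂ A).flip.toLinearMap)

lemma liouvillian_apply (H X : A) : liouvillian H X = -I • (H * X - X * H) := rfl

variable [Fintype K]

/-- The superoperator `Π_ω X = ∑ P_l X P_k`, summed over the pairs `(k, l)` with Bohr frequency
`ε_k - ε_l = ω`: the spectral projection of `liouvillian (∑ k, ε k • P k)` for the
eigenvalue `i ω`. -/
noncomputable def bohrProjection (ε : K → ℝ) (P : K → A) (ω : ℝ) : A →L[ℂ] A :=
  ∑ p : K × K with ε p.1 - ε p.2 = ω, ContinuousLinearMap.mulLeftRight ℂ A (P p.2) (P p.1)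

lemma bohrProjection_apply (ε : K → ℝ) (P : K → A) (ω : ℝ) (X : A) :
    bohrProjection ε P ω X = ∑ p : K × K with ε p.1 - ε p.2 = ω, P p.2 * X * P p.1 := by
  simp only [bohrProjection, sum_apply, ContinuousLinearMap.mulLeftRight_apply]

/-- The finite set `F⁰` of Bohr frequencies `ε_k - ε_l`. -/
noncomputable def bohrFrequencies (ε : K → ℝ) : Finset ℝ :=
  Finset.univ.image fun p : K × K ↦ ε p.1 - ε p.2

lemma sum_bohrProjection (ε : K → ℝ) {P : K → A} (hP : ∑ k, P k = 1) :
    ∑ ω ∈ bohrFrequencies ε, bohrProjection ε P ω = 1 := by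
  ext X
  simp_rw [sum_apply, bohrProjection_apply]
  rw [bohrFrequencies, Finset.sum_fiberwise_of_maps_to
    (fun p _ ↦ Finset.mem_image_of_mem _ (Finset.mem_univ p)), Fintype.sum_prod_type]
  simp_rw [← Finset.sum_mul, ← Finset.mul_sum, hP, one_mul, mul_one, one_apply_eq_self]

section

variable {ε : K → ℝ} {P : K → A} {H : A}

lemma liouvillian_mul_bohrProjection (hHP : ∀ k, H * P k = (ε k : ℂ) • P k)
    (hPH : ∀ k, P k * H = (ε k : ℂ) • P k) (ω : ℝ) :
    liouvillian H * bohrProjection ε P ω = (I * ω) • bohrProjection ε P ω := by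
  ext X
  rw [mul_apply_eq_comp, smul_apply, bohrProjection_apply, map_sum, Finset.smul_sum]
  refine Finset.sum_congr rfl fun p hp ↦ ?_
  rw [liouvillian_apply, ← mul_assoc, ← mul_assoc, hHP, mul_assoc _ _ H, hPH, smul_mul_assoc,
    smul_mul_assoc, mul_smul_comm, ← sub_smul, smul_smul, ← (Finset.mem_filter.1 hp).2]
  push_cast
  ring_nf

lemma bohrProjection_mul_liouvillian (hHP : ∀ k, H * P k = (ε k : ℂ) • P k)
    (hPH : ∀ k, P k * H = (ε k : ℂ) • P k) (ω : ℝ) :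
    bohrProjection ε P ω * liouvillian H = (I * ω) • bohrProjection ε P ω := by
  ext X
  rw [mul_apply_eq_comp, smul_apply, bohrProjection_apply, bohrProjection_apply, Finset.smul_sum]
  refine Finset.sum_congr rfl fun p hp ↦ ?_
  rw [liouvillian_apply, mul_smul_comm, smul_mul_assoc, mul_sub, sub_mul, ← mul_assoc, hPH,
    ← mul_assoc, mul_assoc _ H, hHP, smul_mul_assoc, smul_mul_assoc, mul_smul_comm, ← sub_smul,
    smul_smul, ← (Finset.mem_filter.1 hp).2]
  push_cast
  ring_nf

end

end Liouvillian

lemma tsum_inv_factorial_smul_pow_apply {E : Type*} [NormedAddCommGroup E] [NormedSpace ℂ E]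
    [CompleteSpace E] (T : E →L[ℂ] E) (x : E) :
    ∑' k : ℕ, ((k.factorial : ℂ))⁻¹ • ((T : Module.End ℂ E) ^ k) x = NormedSpace.exp T x := by
  simp_rw [← ContinuousLinearMap.toLinearMap_pow]
  exact ((NormedSpace.exp_series_hasSum_exp' (𝕂 := ℂ) T).mapL
    (ContinuousLinearMap.apply ℂ E x)).tsum_eq

theorem secular_averaging_general {A : Type*} [NormedRing A] [NormedAlgebra ℂ A] [CompleteSpace A]
    {K : Type*} [Fintype K] (ε : K → ℝ) (P : K → A) (hP : CompleteOrthogonalIdempotents P)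
    (H₀ : A) (hH₀ : H₀ = ∑ k : K, (ε k : ℂ) • P k) (δH : A)
    (Lop : ℝ → Module.End ℂ A)
    (hLop : ∀ (l : ℝ) (ρ : A), Lop l ρ =
      (-Complex.I) • ((H₀ + ((l : ℂ) ^ 2) • δH) * ρ - ρ * (H₀ + ((l : ℂ) ^ 2) • δH)))
    (Kop : Module.End ℂ A) (hKop : Continuous Kop)
    (Pin : ℝ → Module.End ℂ A)
    (hPin : ∀ (ω : ℝ) (X : A), Pin ω X =
      ∑ p ∈ Finset.univ.filter (fun p : K × K => ε p.1 - ε p.2 = ω), P p.2 * X * P p.1)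
    (Ksec : Module.End ℂ A)
    (hKsec : Ksec = ∑ ω ∈ Finset.univ.image (fun p : K × K => ε p.1 - ε p.2),
      Pin ω * Kop * Pin ω) (τ₁ : ℝ) :
    ∃ C : ℝ, ∀ (ρ : A) (l t : ℝ), 0 ≤ t → l ^ 2 * t ≤ τ₁ →
      ‖(∑' k : ℕ, ((k.factorial : ℂ))⁻¹ • ((t • (Lop l + ((l : ℂ) ^ 2) • Kop)) ^ k) ρ) -
          (∑' k : ℕ, ((k.factorial : ℂ))⁻¹ • ((t • (Lop l + ((l : ℂ) ^ 2) • Ksec)) ^ k) ρ)‖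
        ≤ C * l ^ 2 * ‖ρ‖ := by
  subst hH₀
  obtain ⟨K', rfl⟩ : ∃ K' : A →L[ℂ] A, K'.toLinearMap = Kop := ⟨⟨Kop, hKop⟩, rfl⟩
  have hHP := sum_smul_mul_of_orthogonalIdempotents hP.toOrthogonalIdempotents (fun k ↦ (ε k : ℂ))
  have hPH := mul_sum_smul_of_orthogonalIdempotents hP.toOrthogonalIdempotents (fun k ↦ (ε k : ℂ))
  obtain ⟨C, hC⟩ := exists_norm_exp_sub_exp_pinching_le Function.injective_id.injOn
    (sum_bohrProjection ε hP.complete) (fun ω _ ↦ liouvillian_mul_bohrProjection hHP hPH ω)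
    (fun ω _ ↦ bohrProjection_mul_liouvillian hHP hPH ω) (liouvillian δH) K' τ₁
  have hPin_coe (ω : ℝ) : Pin ω = (bohrProjection ε P ω).toLinearMap :=
    LinearMap.ext fun X ↦ (hPin ω X).trans (bohrProjection_apply ε P ω X).symm
  have hKsec_coe : Ksec = (pinching (bohrFrequencies ε) (bohrProjection ε P) K').toLinearMap := by
    rw [hKsec, pinching, ContinuousLinearMap.toLinearMap_sum]
    exact Finset.sum_congr rfl fun ω _ ↦ by rw [hPin_coe]; rfl
  have hLop_coe (l : ℝ) :
      Lop l = (liouvillian (∑ k, (ε k : ℂ) • P k + (l : ℂ) ^ 2 • δH)).toLinearMap :=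
    LinearMap.ext (hLop l)
  have hgenerator (l t : ℝ) (M : A →L[ℂ] A) :
      t • (Lop l + ((l : ℂ) ^ 2) • M.toLinearMap) =
        (t • (liouvillian (∑ k, (ε k : ℂ) • P k) + l ^ 2 • (liouvillian δH + M))).toLinearMap := by
    rw [hLop_coe, map_add, map_smul, smul_add (l ^ 2), ← add_assoc, ← Complex.coe_smul (l ^ 2),
      ← Complex.coe_smul (l ^ 2), Complex.ofReal_pow]
    rfl
  refine ⟨C, fun ρ l t ht hlt ↦ ?_⟩
  rw [hKsec_coe, hgenerator, hgenerator, tsum_inv_factorial_smul_pow_apply,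
    tsum_inv_factorial_smul_pow_apply, ← sub_apply]
  exact ContinuousLinearMap.le_of_opNorm_le _ (hC (l ^ 2) t (sq_nonneg l) ht hlt) ρ

/-- Finite-dimensional secular averaging with a nearly degenerate
Hamiltonian: with `L_l ρ = −i [H₀ + l² δH, ρ]`, an arbitrary linear superoperator `Kop`, and
its secular part `Ksec = ∑_{ω ∈ F⁰} Π_ω ∘ Kop ∘ Π_ω`, the semigroups generated by
`L_l + l² Kop` and by `L_l + l² Ksec` become uniformly close on time intervals `0 ≤ l² t ≤ τ₁`
as `l → 0⁺`. Here the exponential of an endomorphism is given by its power series and the norm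
is the Frobenius norm. -/
theorem secular_averaging {n : ℕ} (hn : 0 < n)
    {K : Type*} [Fintype K] (ε : K → ℝ) (hε : Function.Injective ε)
    (P : K → Matrix (Fin n) (Fin n) ℂ)
    (hPherm : ∀ k : K, (P k)ᴴ = P k)
    (hPorth : ∀ k l : K, k ≠ l → P k * P l = 0)
    (hPidem : ∀ k : K, P k * P k = P k)
    (hPsum : ∑ k : K, P k = 1)
    (H₀ : Matrix (Fin n) (Fin n) ℂ) (hH₀ : H₀ = ∑ k : K, (ε k : ℂ) • P k)
    (δH : Matrix (Fin n) (Fin n) ℂ) (hδH : δH.IsHermitian)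
    (hcomm : H₀ * δH = δH * H₀)
    (Lop : ℝ → Module.End ℂ (Matrix (Fin n) (Fin n) ℂ))
    (hLop : ∀ (l : ℝ) (ρ : Matrix (Fin n) (Fin n) ℂ), Lop l ρ =
      (-Complex.I) • ((H₀ + ((l : ℂ) ^ 2) • δH) * ρ - ρ * (H₀ + ((l : ℂ) ^ 2) • δH)))
    (Kop : Module.End ℂ (Matrix (Fin n) (Fin n) ℂ))
    (Pin : ℝ → Module.End ℂ (Matrix (Fin n) (Fin n) ℂ))
    (hPin : ∀ (ω : ℝ) (X : Matrix (Fin n) (Fin n) ℂ), Pin ω X =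
      ∑ p ∈ Finset.univ.filter (fun p : K × K => ε p.1 - ε p.2 = ω),
        P p.2 * X * P p.1)
    (Ksec : Module.End ℂ (Matrix (Fin n) (Fin n) ℂ))
    (hKsec : Ksec = ∑ ω ∈ Finset.univ.image (fun p : K × K => ε p.1 - ε p.2),
      Pin ω * Kop * Pin ω) :
    ∀ ρ : Matrix (Fin n) (Fin n) ℂ, ∀ τ₁ : ℝ, 0 < τ₁ → ∀ η : ℝ, 0 < η →
      ∃ δ : ℝ, 0 < δ ∧ ∀ l : ℝ, 0 < l → l < δ → ∀ t : ℝ, 0 ≤ t → l ^ 2 * t ≤ τ₁ →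
        ‖(∑' k : ℕ, ((k.factorial : ℂ))⁻¹ •
              ((t • (Lop l + ((l : ℂ) ^ 2) • Kop)) ^ k) ρ) -
            (∑' k : ℕ, ((k.factorial : ℂ))⁻¹ •
              ((t • (Lop l + ((l : ℂ) ^ 2) • Ksec)) ^ k) ρ)‖ ≤ η := by
  intro ρ τ₁ _ η hη
  let := Matrix.frobeniusNormedRing (m := Fin n) (α := ℂ)
  let := Matrix.frobeniusNormedAlgebra (R := ℂ) (m := Fin n) (α := ℂ)
  obtain ⟨C, hC⟩ := secular_averaging_general ε P ⟨⟨hPidem, fun k l h ↦ hPorth k l h⟩, hPsum⟩ H₀ hH₀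
    δH Lop hLop Kop Kop.continuous_of_finiteDimensional Pin hPin Ksec hKsec τ₁
  have hcont : ContinuousAt (fun l : ℝ ↦ C * l ^ 2 * ‖ρ‖) 0 := by fun_prop
  have hsmall : ∀ᶠ l : ℝ in nhds 0, C * l ^ 2 * ‖ρ‖ < η :=
    hcont.eventually_lt_const (by simpa using hη)
  obtain ⟨δ, hδ, hδη⟩ := Metric.eventually_nhds_iff.1 hsmall
  exact ⟨δ, hδ, fun l hl hlδ t ht hlt ↦
    (hC ρ l t ht hlt).trans (hδη (by rwa [Real.dist_0_eq_abs, abs_of_pos hl])).le⟩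
end
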